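/- Let A be a σ-unital simple C*-algebra with strict comparison which is not purely infinite. Let a, b ∈ (A⊗K)_+ be such that d_τ(a) < d_τ(b) < ∞ for all τ ∈ QT̃(A)\{0}, and suppose ω(a) = 0. Then there exists x ∈ A⊗K such that x*x = a and xx* ∈ Her(b), i.e., a ≾̃ b. -/

import Mathlib

open scoped ENNReal
open Filter Topology

noncomputable section

namespace Paper

/-! ### Generic definitions in a (non-unital) C*-algebra -/

variable (R : Type*) [NonUnitalCStarAlgebra R] [PartialOrder R] [StarOrderedRing R]

variable {R} in
/-- The hereditary C*-subalgebra generated by `b`, i.e. `closure (b R b)`. -/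
def her (b : R) : Set R := closure {x : R | ∃ y : R, x = b * y * b}

/-- `I` is a (not necessarily closed) two-sided ideal of the subalgebra `B`. -/
def IsIdealIn (B I : Set R) : Prop :=
  I ⊆ B ∧ (0 : R) ∈ I ∧ (∀ x ∈ I, ∀ y ∈ I, x + y ∈ I) ∧ (∀ x ∈ I, -x ∈ I) ∧
    (∀ x ∈ I, ∀ b ∈ B, x * b ∈ I ∧ b * x ∈ I)

variable {R} in
/-- The Pedersen ideal of the subalgebra `B`: the minimal dense two-sided ideal of `B`,
equivalently the intersection of all dense two-sided ideals of `B`. -/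
def pedersenIn (B : Set R) : Set R :=
  ⋂ I ∈ {I : Set R | IsIdealIn R B I ∧ B ⊆ closure I}, I

/-- The Pedersen ideal of `R`. -/
def pedersen : Set R := pedersenIn (Set.univ : Set R)

variable {R} in
/-- Cuntz subequivalence `a ≲ b`. -/
def CuntzLE (a b : R) : Prop :=
  ∃ x : ℕ → R, Tendsto (fun n => ‖a - star (x n) * b * x n‖) atTop (𝓝 0)

variable {R} in
/-- Cuntz subequivalence relative to a subset `B` (the `xₙ` are taken in `B`). -/
def CuntzLEIn (B : Set R) (a b : R) : Prop :=
  ∃ x : ℕ → R, (∀ n, x n ∈ B) ∧ Tendsto (fun n => ‖a - star (x n) * b * x n‖) atTop (𝓝 0)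

variable {R} in
/-- Cuntz equivalence `a ∼ b`. -/
def CuntzEq (a b : R) : Prop := CuntzLE a b ∧ CuntzLE b a

/-- The cut-off function `f_ε`: `0` on `[0, ε/2]`, `1` on `[ε, ∞)`, linear in between. -/
def cutoff (ε : ℝ) : ℝ → ℝ := fun t => min 1 (max 0 (2 * t / ε - 1))

variable {R} in
/-- `f_ε(a)`, via the (non-unital) continuous functional calculus. -/
def fEps (ε : ℝ) (a : R) : R := cfcₙ (cutoff ε) a

/-- A densely defined 2-quasitrace on `R` (recorded by its values on positive elements;
the value on non-positive elements is normalised to `0`). -/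
structure QuasiTrace : Type _ where
  toFun : R → ℝ≥0∞
  zero_of_not_nonneg : ∀ a : R, ¬ (0 ≤ a) → toFun a = 0
  map_zero : toFun 0 = 0
  map_smul : ∀ (r : ℝ) (a : R), 0 < r → 0 ≤ a → toFun (r • a) = ENNReal.ofReal r * toFun a
  map_add_of_commute : ∀ a b : R, 0 ≤ a → 0 ≤ b → a * b = b * a →
    toFun (a + b) = toFun a + toFun b
  map_star_mul_self : ∀ x : R, toFun (star x * x) = toFun (x * star x)
  lowerSemicontinuousOn : LowerSemicontinuousOn toFun {a : R | 0 ≤ a}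
  finite_on_pedersen : ∀ a ∈ pedersen R, 0 ≤ a → toFun a < ∞
  exists_matrix_extension : ∃ σ : Matrix (Fin 2) (Fin 2) R → ℝ≥0∞,
    (∀ a : R, σ (fun i j => if i = 0 ∧ j = 0 then a else 0) = toFun a) ∧
    σ 0 = 0 ∧
    (∀ (r : ℝ) (x : Matrix (Fin 2) (Fin 2) R), 0 < r → (∃ y, x = star y * y) →
      σ (r • x) = ENNReal.ofReal r * σ x) ∧
    (∀ x y : Matrix (Fin 2) (Fin 2) R, (∃ z, x = star z * z) → (∃ z, y = star z * z) →
      x * y = y * x → σ (x + y) = σ x + σ y) ∧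
    (∀ x : Matrix (Fin 2) (Fin 2) R, σ (star x * x) = σ (x * star x))

/-- The topology of pointwise convergence on the Pedersen ideal. -/
instance : TopologicalSpace (QuasiTrace R) :=
  TopologicalSpace.induced (fun τ => fun a : pedersen R => τ.toFun a) inferInstance

variable {R}

/-- The zero quasitrace. -/
def QuasiTrace.IsZero (τ : QuasiTrace R) : Prop := ∀ a : R, τ.toFun a = 0

/-- The dimension function `d_τ(a) = lim_{ε → 0} τ(f_ε(a))`. -/
def dTau (τ : QuasiTrace R) (a : R) : ℝ≥0∞ :=
  ⨆ n : ℕ, τ.toFun (fEps (1 / (n + 1)) a)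

/-- `ω(a)` relative to a set `S` of quasitraces:
`lim_n sup {d_τ(a) - τ(f_{1/n}(a)) : τ ∈ S}`. -/
def omegaOn (S : Set (QuasiTrace R)) (a : R) : ℝ≥0∞ :=
  ⨅ n : ℕ, ⨆ τ ∈ S, (dTau τ a - τ.toFun (fEps (1 / (n + 1)) a))

/-- The seminorm `‖x‖_{2,S}`. -/
def norm2On (S : Set (QuasiTrace R)) (x : R) : ℝ≥0∞ :=
  ⨆ τ ∈ S, (τ.toFun (star x * x)) ^ (1 / 2 : ℝ)

variable (R)

/-- `R` has (Blackadar's) strict comparison. -/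
def StrictComparison : Prop :=
  ∀ a b : R, 0 ≤ a → 0 ≤ b →
    (∀ τ : QuasiTrace R, ¬ τ.IsZero → dTau τ a < dTau τ b) → CuntzLE a b

/-- `R` is a simple C*-algebra: it is nonzero and has no nontrivial closed two-sided ideals. -/
def IsSimpleCStar : Prop :=
  (∃ x : R, x ≠ 0) ∧
    ∀ I : TwoSidedIdeal R, IsClosed (I : Set R) → (I : Set R) = {0} ∨ (I : Set R) = Set.univ

/-- `R` is σ-unital: it contains a strictly positive element `h`
(equivalently, `Her(h) = R`). -/
def SigmaUnital : Prop := ∃ h : R, 0 ≤ h ∧ her h = Set.univ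

/-- `R` is elementary: isomorphic to the algebra of compact operators on some Hilbert space. -/
def IsElementary : Prop :=
  ∃ (H : Type) (_ : NormedAddCommGroup H) (_ : InnerProductSpace ℂ H) (_ : CompleteSpace H)
    (φ : R →⋆ₙₐ[ℂ] (H →L[ℂ] H)), Function.Injective φ ∧
      Set.range φ = {T : H →L[ℂ] H | IsCompactOperator (⇑T)}

/-- `R` is purely infinite: `R ≇ ℂ` and `b ≲ a` for all nonzero positive `a, b`. -/
def PurelyInfinite : Prop :=
  (¬ ∃ φ : R →⋆ₙₐ[ℂ] ℂ, Function.Bijective φ) ∧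
    ∀ a b : R, 0 ≤ a → 0 ≤ b → a ≠ 0 → b ≠ 0 → CuntzLE b a

/-- `R` is finite: its minimal unitization contains no non-unitary isometry. -/
def IsFiniteCStar : Prop :=
  ∀ v : Unitization ℂ R, star v * v = 1 → v * star v = 1

/-- `R` has stable rank one: the invertible elements are dense in the minimal unitization. -/
def StableRankOne : Prop := Dense {x : Unitization ℂ R | IsUnit x}

variable {R}

/-- `c` represents `n·[a]` in the Cuntz semigroup: it is the sum of `n` mutually
orthogonal positive elements, each Cuntz equivalent to `a`. -/
def IsNFoldRep (n : ℕ) (a c : R) : Prop :=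
  ∃ f : Fin n → R, (∀ i, 0 ≤ f i) ∧ (∀ i, CuntzEq (f i) a) ∧
    (∀ i j, i ≠ j → f i * f j = 0) ∧ c = ∑ i, f i

/-- `s` represents the supremum of the increasing sequence of Cuntz classes `[y n]`. -/
def IsCuntzLUB (y : ℕ → R) (s : R) : Prop :=
  (∀ n, CuntzLE (y n) s) ∧ ∀ c : R, 0 ≤ c → (∀ n, CuntzLE (y n) c) → CuntzLE s c

/-- `[x] ≪ [y]` in the Cuntz semigroup. -/
def CuntzWayBelow (x y : R) : Prop :=
  ∀ yseq : ℕ → R, (∀ n, 0 ≤ yseq n) → (∀ n, CuntzLE (yseq n) (yseq (n + 1))) →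
    ∀ s : R, 0 ≤ s → IsCuntzLUB yseq s → CuntzLE y s → ∃ n₀, CuntzLE x (yseq n₀)

variable (R)

/-- The Cuntz semigroup of `R` is almost unperforated. -/
def AlmostUnperforated : Prop :=
  ∀ (a b : R) (k : ℕ), 1 ≤ k → 0 ≤ a → 0 ≤ b →
    (∃ c d : R, IsNFoldRep (k + 1) a c ∧ IsNFoldRep k b d ∧ CuntzLE c d) → CuntzLE a b

/-- The Cuntz semigroup of `R` is almost divisible. -/
def AlmostDivisible : Prop :=
  ∀ x y : R, 0 ≤ x → 0 ≤ y → CuntzWayBelow x y → ∀ n : ℕ, 1 ≤ n →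
    ∃ z : R, 0 ≤ z ∧ (∃ c : R, IsNFoldRep n z c ∧ CuntzLE c y) ∧
      (∃ c : R, IsNFoldRep (n + 1) z c ∧ CuntzLE x c)

/-! ### The stabilization `W ≅ A ⊗ K` -/

variable (A W : Type*) [NonUnitalCStarAlgebra A] [PartialOrder A] [StarOrderedRing A]
  [NonUnitalCStarAlgebra W] [PartialOrder W] [StarOrderedRing W]

/-- A realization of `W` as the stabilization `A ⊗ K`: the maps `emb i j : a ↦ a ⊗ e_{ij}`
are isometric, satisfy the matrix-unit relations, and have dense joint linear span. -/
structure Stabilization : Type _ where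
  emb : ℕ → ℕ → (A →ₗ[ℂ] W)
  emb_mul : ∀ (i j k l : ℕ) (a b : A),
    emb i j a * emb k l b = if j = k then emb i l (a * b) else 0
  emb_star : ∀ (i j : ℕ) (a : A), star (emb i j a) = emb j i (star a)
  norm_emb : ∀ (i j : ℕ) (a : A), ‖emb i j a‖ = ‖a‖
  dense_span : Dense (Submodule.span ℂ {w : W | ∃ (i j : ℕ) (a : A), w = emb i j a} : Set W)

variable {A W}

/-- The set `QT(A)` of quasitraces normalized on `A ⊆ A ⊗ K`. -/
def QTSet (SB : Stabilization A W) : Set (QuasiTrace W) :=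
  {τ | (⨆ a : {a : A // 0 ≤ a ∧ ‖a‖ ≤ 1}, τ.toFun (SB.emb 0 0 a)) = 1}

/-- The quasitraces normalized on the hereditary subalgebra `Her(c) ⊆ W`. -/
def QTSetHer (c : W) : Set (QuasiTrace W) :=
  {τ : QuasiTrace W |
    (⨆ a : {a : W // a ∈ her c ∧ 0 ≤ a ∧ ‖a‖ ≤ 1}, τ.toFun a) = 1}

/-- `ω(a) = 0` for `a ∈ W = A ⊗ K`, computed relative to `\overline{QT(Her(e))}^w`
for any nonzero `e ∈ Ped(A)₊`. -/
def OmegaZero (SB : Stabilization A W) (a : W) : Prop :=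
  ∀ e : A, 0 ≤ e → e ≠ 0 → e ∈ pedersen A →
    omegaOn (closure (QTSetHer (SB.emb 0 0 e))) a = 0

/-- `A` has tracial approximate oscillation zero. -/
def TAOZ (SB : Stabilization A W) : Prop :=
  ∀ e : A, 0 ≤ e → e ≠ 0 → e ∈ pedersen A →
    ∀ a : W, 0 ≤ a → a ∈ pedersen W →
      ∃ b : ℕ → W, (∀ n, 0 ≤ b n) ∧ (∀ n, ‖b n‖ ≤ 1) ∧
        (∀ n, b n ∈ pedersenIn (her a)) ∧
        Tendsto (fun n => omegaOn (closure (QTSetHer (SB.emb 0 0 e))) (b n)) atTop (𝓝 0) ∧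
        Tendsto (fun n => norm2On (closure (QTSetHer (SB.emb 0 0 e))) (a - b n)) atTop (𝓝 0)

/-! ### Affine functions on the quasitrace cone and the map `Γ` -/

variable (W) in
/-- `ρ = t·τ + (1-t)·σ` as quasitraces. -/
def IsCombo (t : ℝ) (τ σ ρ : QuasiTrace W) : Prop :=
  ∀ a : W, 0 ≤ a →
    ρ.toFun a = ENNReal.ofReal t * τ.toFun a + ENNReal.ofReal (1 - t) * σ.toFun a

variable (W) in
/-- `f` is affine on the quasitrace cone. -/
def IsAffineQT (f : QuasiTrace W → ℝ≥0∞) : Prop :=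
  ∀ t : ℝ, 0 ≤ t → t ≤ 1 → ∀ τ σ ρ : QuasiTrace W, IsCombo W t τ σ ρ →
    f ρ = ENNReal.ofReal t * f τ + ENNReal.ofReal (1 - t) * f σ

variable (W) in
/-- Membership in `Aff₊(QT̃(A))`. -/
def MemAffPlus (f : QuasiTrace W → ℝ≥0∞) : Prop :=
  (∀ τ, f τ = 0) ∨
    (Continuous f ∧ IsAffineQT W f ∧ (∀ τ, f τ < ∞) ∧
      (∀ τ : QuasiTrace W, ¬ τ.IsZero → 0 < f τ) ∧
      (∀ τ : QuasiTrace W, τ.IsZero → f τ = 0))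

variable (W) in
/-- Membership in `LAff₊(QT̃(A))`. -/
def MemLAffPlus (f : QuasiTrace W → ℝ≥0∞) : Prop :=
  ∃ g : ℕ → QuasiTrace W → ℝ≥0∞, (∀ n, MemAffPlus W (g n)) ∧
    (∀ n τ, g n τ ≤ g (n + 1) τ) ∧ ∀ τ, f τ = ⨆ n, g n τ

variable (W) in
/-- The canonical map `Γ : Cu(A) → LAff₊(QT̃(A))`, `Γ([a])(τ) = d_τ(a)`, is surjective. -/
def GammaSurjective : Prop :=
  ∀ f : QuasiTrace W → ℝ≥0∞, MemLAffPlus W f →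
    ∃ a : W, 0 ≤ a ∧ ∀ τ : QuasiTrace W, dTau τ a = f τ

/-!
Only quasitraces in the base `S` of those of norm one on a nonzero `e ∈ Ped(A)₊` matter, as every
nonzero quasitrace is a multiple of one in `S`. Vanishing of `ω(a)` makes `τ ↦ d_τ(a)` upper
semicontinuous along ultrafilter limits in `S`, so the strict inequality `d_τ(a) < d_τ(b)` has a
uniform gap `η` on `S`. It also makes the spectral bands of `a` close to `0` uniformly small: the
bands can be chosen so that their dimensions exceed that of `a` by less than `η` in total. Hence
strict comparison can be applied to one band after another, each time inside a remainder of `b`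
orthogonal to the earlier images, and the pieces obtained are summable with sum the required `x`.
-/

variable {R}

/-! ### Functional calculus -/

section FunctionalCalculus

variable {f g : ℝ → ℝ} {a : R}

theorem cfcₙ_congr_of_nonneg (ha : 0 ≤ a) (h : ∀ t, 0 ≤ t → f t = g t) : cfcₙ f a = cfcₙ g a :=
  cfcₙ_congr fun t ht => h t (quasispectrum_nonneg_of_nonneg a ha t ht)

theorem cfcₙ_mono_of_nonneg (ha : 0 ≤ a) (hf : Continuous f) (hf0 : f 0 = 0) (hg : Continuous g)
    (hg0 : g 0 = 0) (h : ∀ t, 0 ≤ t → f t ≤ g t) : cfcₙ f a ≤ cfcₙ g a :=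
  cfcₙ_mono fun t ht => h t (quasispectrum_nonneg_of_nonneg a ha t ht)

theorem cfcₙ_nonneg_of_nonneg (ha : 0 ≤ a) (h : ∀ t, 0 ≤ t → 0 ≤ f t) : 0 ≤ cfcₙ f a :=
  cfcₙ_nonneg fun t ht => h t (quasispectrum_nonneg_of_nonneg a ha t ht)

theorem norm_cfcₙ_le_of_nonneg (ha : 0 ≤ a) {c : ℝ} (h : ∀ t, 0 ≤ t → |f t| ≤ c) :
    ‖cfcₙ f a‖ ≤ c :=
  norm_cfcₙ_le fun t ht => h t (quasispectrum_nonneg_of_nonneg a ha t ht)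

omit [PartialOrder R] [StarOrderedRing R] in
theorem star_cfcₙ (f : ℝ → ℝ) (a : R) : star (cfcₙ f a) = cfcₙ f a :=
  (cfcₙ_predicate f a : IsSelfAdjoint _).star_eq

omit [PartialOrder R] [StarOrderedRing R] in
theorem cfcₙ_mul_self (hf : Continuous f) (hf0 : f 0 = 0) (ha : IsSelfAdjoint a) :
    cfcₙ f a * a = cfcₙ (fun t => f t * t) a := by
  rw [cfcₙ_mul f (fun t => t) a, cfcₙ_id' ℝ a]

omit [PartialOrder R] [StarOrderedRing R] in
theorem self_mul_cfcₙ (hf : Continuous f) (hf0 : f 0 = 0) (ha : IsSelfAdjoint a) :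
    a * cfcₙ f a = cfcₙ (fun t => t * f t) a := by
  rw [cfcₙ_mul (fun t => t) f a, cfcₙ_id' ℝ a]

omit [PartialOrder R] [StarOrderedRing R] in
theorem cfcₙ_mul_self_mul_cfcₙ (hf : Continuous f) (hf0 : f 0 = 0) (hg : Continuous g)
    (hg0 : g 0 = 0) (ha : IsSelfAdjoint a) :
    cfcₙ f a * a * cfcₙ g a = cfcₙ (fun t => f t * t * g t) a := by
  rw [cfcₙ_mul_self hf hf0 ha, cfcₙ_mul (fun t => f t * t) g a]

omit [PartialOrder R] [StarOrderedRing R] in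
theorem le_norm_of_mem_quasispectrum (ha : IsSelfAdjoint a) {t : ℝ} (ht : t ∈ quasispectrum ℝ a) :
    t ≤ ‖a‖ := by
  simpa only [id_eq, cfcₙ_id ℝ a] using
    (le_abs_self t).trans (norm_apply_le_norm_cfcₙ (id : ℝ → ℝ) a ht)

theorem exists_isSelfAdjoint_mul_self_eq (ha : 0 ≤ a) : ∃ k : R, IsSelfAdjoint k ∧ k * k = a :=
  ⟨CFC.sqrt a, (CFC.sqrt_nonneg a).isSelfAdjoint, CFC.sqrt_mul_sqrt_self a⟩

end FunctionalCalculus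

theorem conjugate_le_norm_smul {h d : R} (hh : IsSelfAdjoint h)
    (hd : IsSelfAdjoint d) : h * d * h ≤ ‖d‖ • (h * h) := by
  simpa only [hh.star_eq] using CStarAlgebra.star_left_conjugate_le_norm_smul (a := h) (b := d) hd

/-- The product `(1 - u) d (1 - u)` of the unitization, which lies in the algebra itself. -/
def conjOneSub (u d : R) : R := d - u * d - d * u + u * d * u

section ConjOneSub

variable {u d e : R}

omit [PartialOrder R] [StarOrderedRing R] in
theorem conjOneSub_mul_star (hu : IsSelfAdjoint u) (x : R) :
    conjOneSub u (x * star x) = (x - u * x) * star (x - u * x) := by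
  simp only [conjOneSub, star_sub, star_mul, hu.star_eq]
  noncomm_ring

theorem conjOneSub_nonneg (hu : IsSelfAdjoint u) (hd : 0 ≤ d) : 0 ≤ conjOneSub u d := by
  obtain ⟨k, rfl⟩ := CStarAlgebra.nonneg_iff_eq_mul_star_self.1 hd
  rw [conjOneSub_mul_star hu]
  exact mul_star_self_nonneg _

theorem conjOneSub_mono (hu : IsSelfAdjoint u) (hde : d ≤ e) :
    conjOneSub u d ≤ conjOneSub u e := by
  rw [← sub_nonneg]
  convert conjOneSub_nonneg hu (sub_nonneg.2 hde) using 1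
  simp only [conjOneSub]
  noncomm_ring

omit [PartialOrder R] [StarOrderedRing R] in
theorem conjOneSub_cfcₙ {f : ℝ → ℝ} (hf : Continuous f) (hf0 : f 0 = 0) (hd : IsSelfAdjoint d) :
    conjOneSub (cfcₙ f d) d = cfcₙ (fun t => t * (1 - f t) ^ 2) d := by
  rw [conjOneSub, cfcₙ_mul_self_mul_cfcₙ hf hf0 hf hf0 hd, self_mul_cfcₙ hf hf0 hd,
    cfcₙ_mul_self hf hf0 hd]
  conv_lhs => enter [1, 1, 1]; rw [← cfcₙ_id' ℝ d]
  rw [← cfcₙ_sub (fun t => t) (fun t => f t * t) d,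
    ← cfcₙ_sub (fun t => t - f t * t) (fun t => t * f t) d,
    ← cfcₙ_add (fun t => t - f t * t - t * f t) (fun t => f t * t * f t) d]
  congr 1
  ext t
  ring

omit [PartialOrder R] [StarOrderedRing R] in
theorem conjOneSub_mul_eq_zero {x : R} (hux : u * x = x) : conjOneSub u d * x = 0 := by
  simp only [conjOneSub, add_mul, sub_mul, mul_assoc, hux]
  abel

end ConjOneSub

section NormEstimates

variable {h w : R} {g : ℝ → ℝ} {c : ℝ}

theorem norm_cfcₙ_mul_sq_le (hle : h * star h ≤ w) (hg : Continuous g) (hg0 : g 0 = 0)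
    (hc : ∀ t, 0 ≤ t → t * g t ^ 2 ≤ c) : ‖cfcₙ g w * h‖ ^ 2 ≤ c := by
  have hw : 0 ≤ w := (mul_star_self_nonneg h).trans hle
  have hconj : cfcₙ g w * h * star (cfcₙ g w * h) ≤ cfcₙ g w * w * cfcₙ g w := by
    rw [star_mul, star_cfcₙ, ← mul_assoc, mul_assoc _ h]
    exact (cfcₙ_predicate g w : IsSelfAdjoint _).conjugate_le_conjugate hle
  rw [sq, ← CStarRing.norm_self_mul_star]
  refine (CStarAlgebra.norm_le_norm_of_nonneg_of_le (mul_star_self_nonneg _) hconj).trans ?_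
  rw [cfcₙ_mul_self_mul_cfcₙ hg hg0 hg hg0 hw.isSelfAdjoint]
  refine norm_cfcₙ_le_of_nonneg hw fun t ht => ?_
  rw [show g t * t * g t = t * g t ^ 2 by ring, abs_of_nonneg (by positivity)]
  exact hc t ht

theorem norm_sub_cfcₙ_mul_sq_le (hle : h * star h ≤ w) (hg : Continuous g) (hg0 : g 0 = 0)
    (hc : ∀ t, 0 ≤ t → t * (1 - g t) ^ 2 ≤ c) : ‖h - cfcₙ g w * h‖ ^ 2 ≤ c := by
  have hw : 0 ≤ w := (mul_star_self_nonneg h).trans hle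
  have hs : IsSelfAdjoint (cfcₙ g w) := cfcₙ_predicate g w
  rw [sq, ← CStarRing.norm_self_mul_star, ← conjOneSub_mul_star hs]
  refine (CStarAlgebra.norm_le_norm_of_nonneg_of_le
    (conjOneSub_nonneg hs (mul_star_self_nonneg h)) (conjOneSub_mono hs hle)).trans ?_
  rw [conjOneSub_cfcₙ hg hg0 hw.isSelfAdjoint]
  refine norm_cfcₙ_le_of_nonneg hw fun t ht => ?_
  rw [abs_of_nonneg (by positivity)]
  exact hc t ht

end NormEstimates

/-! ### Closed right ideals and factorization -/

/-- The closed right ideal `closure (b R)` generated by `b`. -/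
def closedRightIdeal (b : R) : Submodule ℂ R :=
  (LinearMap.range (LinearMap.mulLeft ℂ b)).topologicalClosure

section ClosedRightIdeal

variable {b x y : R}

omit [PartialOrder R] [StarOrderedRing R]

theorem mul_mem_closedRightIdeal_self (b r : R) : b * r ∈ closedRightIdeal b :=
  Submodule.le_topologicalClosure _ ⟨r, rfl⟩

theorem isClosed_closedRightIdeal (b : R) : IsClosed (closedRightIdeal b : Set R) :=
  Submodule.isClosed_topologicalClosure _

theorem closedRightIdeal_subset {s : Set R} (hs : IsClosed s) (h : ∀ r, b * r ∈ s) :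
    (closedRightIdeal b : Set R) ⊆ s :=
  closure_minimal (by rintro _ ⟨r, rfl⟩; exact h r) hs

theorem mul_mem_closedRightIdeal (hx : x ∈ closedRightIdeal b) (r : R) :
    x * r ∈ closedRightIdeal b := by
  refine closedRightIdeal_subset ((isClosed_closedRightIdeal b).preimage
    (f := fun t : R => t * r) (by fun_prop)) (fun s => ?_) hx
  simpa only [Set.mem_preimage, SetLike.mem_coe, mul_assoc] using
    mul_mem_closedRightIdeal_self b (s * r)

theorem closedRightIdeal_le (hx : x ∈ closedRightIdeal b) :
    closedRightIdeal x ≤ closedRightIdeal b :=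
  closedRightIdeal_subset (isClosed_closedRightIdeal b) (mul_mem_closedRightIdeal hx)

theorem mul_eq_self_of_mem_closedRightIdeal {e : R} (he : e * b = b)
    (hx : x ∈ closedRightIdeal b) : e * x = x :=
  closedRightIdeal_subset (s := {y | e * y = y}) (isClosed_eq (by fun_prop) (by fun_prop))
    (fun r => by simp only [Set.mem_ofPred_eq, ← mul_assoc, he]) hx

theorem star_mul_eq_zero_of_mem_closedRightIdeal (hb : IsSelfAdjoint b) (hbx : b * x = 0)
    (hy : y ∈ closedRightIdeal b) : star y * x = 0 :=
  closedRightIdeal_subset (s := {y | star y * x = 0}) (isClosed_eq (by fun_prop) (by fun_prop))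
    (fun r => by simp only [Set.mem_ofPred_eq, star_mul, hb.star_eq, mul_assoc, hbx, mul_zero]) hy

theorem mul_star_self_mem_her (hb : IsSelfAdjoint b) (hx : x ∈ closedRightIdeal b) :
    x * star x ∈ her b := by
  refine closedRightIdeal_subset ((isClosed_closure (s := {x : R | ∃ y, x = b * y * b})).preimage
    (f := fun t : R => t * star t) (by fun_prop)) (fun r => subset_closure ?_) hx
  exact ⟨r * star r, by simp only [star_mul, hb.star_eq, mul_assoc]⟩

end ClosedRightIdeal

/-- A continuous approximation, vanishing at `0`, of `t ↦ 1 / √t` on `[0, ∞)`: its product with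
`√t` is the approximate unit `t / (t + ε)`. -/
def approxInvSqrt (ε t : ℝ) : ℝ := √t / (|t| + ε)

theorem continuous_approxInvSqrt {ε : ℝ} (hε : 0 < ε) : Continuous (approxInvSqrt ε) := by
  unfold approxInvSqrt
  exact Continuous.div (by fun_prop) (by fun_prop) fun t => by positivity

theorem approxInvSqrt_zero (ε : ℝ) : approxInvSqrt ε 0 = 0 := by simp [approxInvSqrt]

theorem sqrt_mul_approxInvSqrt {ε t : ℝ} (ht : 0 ≤ t) :
    √t * approxInvSqrt ε t = t / (t + ε) := by
  rw [approxInvSqrt, abs_of_nonneg ht, ← mul_div_assoc, Real.mul_self_sqrt ht]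

theorem one_sub_sqrt_mul_approxInvSqrt {ε t : ℝ} (hε : 0 < ε) (ht : 0 ≤ t) :
    1 - √t * approxInvSqrt ε t = ε / (t + ε) := by
  rw [sqrt_mul_approxInvSqrt ht]
  field_simp
  ring

theorem mul_one_sub_sqrt_mul_approxInvSqrt_sq_le {ε t : ℝ} (hε : 0 < ε) (ht : 0 ≤ t) :
    t * (1 - √t * approxInvSqrt ε t) ^ 2 ≤ ε := by
  rw [one_sub_sqrt_mul_approxInvSqrt hε ht, div_pow, ← mul_div_assoc, div_le_iff₀ (by positivity)]
  nlinarith [mul_nonneg ht hε.le, sq_nonneg t, sq_nonneg ε]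

theorem mul_sq_sqrt_mul_approxInvSqrt_sub_le {ε δ t : ℝ} (hδ : 0 < δ) (hδε : δ ≤ ε) (ht : 0 ≤ t) :
    t * (√t * (approxInvSqrt ε t - approxInvSqrt δ t)) ^ 2 ≤ ε := by
  have hε := hδ.trans_le hδε
  refine le_trans ?_ (mul_one_sub_sqrt_mul_approxInvSqrt_sq_le hε ht)
  have hδ0 := one_sub_sqrt_mul_approxInvSqrt hδ ht
  have hε0 := one_sub_sqrt_mul_approxInvSqrt hε ht
  have hnonneg : 0 ≤ δ / (t + δ) := by positivity
  have hmono : δ / (t + δ) ≤ ε / (t + ε) := by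
    rw [div_le_div_iff₀ (by positivity) (by positivity)]
    nlinarith
  gcongr t * ?_
  refine sq_le_sq' ?_ ?_ <;> linarith

theorem exists_sqrt_mem_closedRightIdeal {b : R} (hb : 0 ≤ b) :
    ∃ m : R, IsSelfAdjoint m ∧ m * m = b ∧ m ∈ closedRightIdeal b := by
  refine ⟨cfcₙ (fun t : ℝ => √t) b, cfcₙ_predicate _ b, ?_, ?_⟩
  · rw [← cfcₙ_mul (fun t => √t) (fun t => √t) b]
    conv_rhs => rw [← cfcₙ_id' ℝ b hb.isSelfAdjoint]
    exact cfcₙ_congr_of_nonneg hb fun t ht => Real.mul_self_sqrt ht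
  refine Metric.mem_closure_iff.2 fun ε hε => ?_
  have hε2 : 0 < (ε / 2) ^ 2 := by positivity
  have hc := continuous_approxInvSqrt hε2
  have h0 := approxInvSqrt_zero ((ε / 2) ^ 2)
  refine ⟨_, ⟨cfcₙ (approxInvSqrt ((ε / 2) ^ 2)) b, rfl⟩, ?_⟩
  rw [dist_eq_norm, LinearMap.mulLeft_apply, self_mul_cfcₙ hc h0 hb.isSelfAdjoint,
    ← cfcₙ_sub (fun t => √t) (fun t => t * approxInvSqrt ((ε / 2) ^ 2) t) b]
  refine (norm_cfcₙ_le_of_nonneg hb fun t ht => ?_).trans_lt (half_lt_self hε)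
  refine abs_le_of_sq_le_sq ((mul_one_sub_sqrt_mul_approxInvSqrt_sq_le hε2 ht).trans_eq' ?_)
    (by positivity)
  have hmul : √t - t * approxInvSqrt ((ε / 2) ^ 2) t
      = √t * (1 - √t * approxInvSqrt ((ε / 2) ^ 2) t) := by
    rw [mul_sub, mul_one, ← mul_assoc, Real.mul_self_sqrt ht]
  rw [hmul, mul_pow, Real.sq_sqrt ht]

section Factorization

variable {h z : R} {p : ℝ → ℝ}

theorem star_mul_self_mul_cfcₙ_mul (hp : Continuous p) (hp0 : p 0 = 0) :
    star (z * (cfcₙ p (star z * z) * h)) * (z * (cfcₙ p (star z * z) * h))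
      = star (cfcₙ (fun t => √t * p t) (star z * z) * h)
        * (cfcₙ (fun t => √t * p t) (star z * z) * h) := by
  have hw := star_mul_self_nonneg z
  have hsq : cfcₙ p (star z * z) * (star z * z) * cfcₙ p (star z * z)
      = cfcₙ (fun t => √t * p t) (star z * z) * cfcₙ (fun t => √t * p t) (star z * z) := by
    rw [cfcₙ_mul_self_mul_cfcₙ hp hp0 hp hp0 hw.isSelfAdjoint,
      ← cfcₙ_mul (fun t => √t * p t) (fun t => √t * p t)]
    refine cfcₙ_congr_of_nonneg hw fun t ht => ?_
    rw [mul_mul_mul_comm, Real.mul_self_sqrt ht]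
    ring
  calc _ = star h * (cfcₙ p (star z * z) * (star z * z) * cfcₙ p (star z * z)) * h := by
        simp only [star_mul, star_cfcₙ, mul_assoc]
    _ = _ := by
        rw [hsq]
        simp only [star_mul, star_cfcₙ, mul_assoc]

theorem norm_mul_cfcₙ_mul_sq_le (hle : h * star h ≤ star z * z) (hp : Continuous p)
    (hp0 : p 0 = 0) {c : ℝ} (hc : ∀ t, 0 ≤ t → t * (√t * p t) ^ 2 ≤ c) :
    ‖z * (cfcₙ p (star z * z) * h)‖ ^ 2 ≤ c := by
  rw [sq, ← CStarRing.norm_star_mul_self, star_mul_self_mul_cfcₙ_mul hp hp0,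
    CStarRing.norm_star_mul_self, ← sq]
  exact norm_cfcₙ_mul_sq_le hle (by fun_prop) (by simp [hp0]) hc

theorem exists_star_mul_self_eq_of_le (hle : h * star h ≤ star z * z) :
    ∃ y ∈ closedRightIdeal z, star y * y = star h * h := by
  set w := star z * z
  let ε : ℕ → ℝ := fun n => 1 / (n + 1)
  have hε : ∀ n, 0 < ε n := fun n => Nat.one_div_pos_of_nat
  have hanti : ∀ n m, n ≤ m → ε m ≤ ε n := fun n m => Nat.one_div_le_one_div
  have hlim : Tendsto (fun n => √(ε n)) atTop (𝓝 0) := by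
    simpa [ε, Function.comp_def] using
      (Real.continuous_sqrt.tendsto 0).comp tendsto_one_div_add_atTop_nhds_zero_nat
  have hc := fun n => continuous_approxInvSqrt (hε n)
  have h0 := fun n => approxInvSqrt_zero (ε n)
  let y : ℕ → R := fun n => z * (cfcₙ (approxInvSqrt (ε n)) w * h)
  have hy : ∀ n m, n ≤ m → ‖y n - y m‖ ≤ √(ε n) := fun n m hnm => by
    refine Real.le_sqrt_of_sq_le ?_
    rw [← mul_sub, ← sub_mul, ← cfcₙ_sub (approxInvSqrt (ε n)) (approxInvSqrt (ε m)) w]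
    exact norm_mul_cfcₙ_mul_sq_le hle ((hc n).sub (hc m)) (by rw [Pi.sub_apply, h0, h0, sub_zero])
      fun t ht => mul_sq_sqrt_mul_approxInvSqrt_sub_le (hε m) (hanti n m hnm) ht
  obtain ⟨l, hl⟩ := cauchySeq_tendsto_of_complete
    (cauchySeq_of_le_tendsto_0' (fun n => √(ε n)) (fun n m hnm => dist_eq_norm (y n) _ ▸ hy n m hnm)
      hlim)
  refine ⟨l, (isClosed_closedRightIdeal z).mem_of_tendsto hl
    (.of_forall fun n => mul_mem_closedRightIdeal_self z _), ?_⟩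
  have hunit : Tendsto (fun n => cfcₙ (fun t => √t * approxInvSqrt (ε n) t) w * h) atTop (𝓝 h) := by
    refine tendsto_iff_norm_sub_tendsto_zero.2 (squeeze_zero (fun _ => norm_nonneg _) (fun n => ?_)
      hlim)
    rw [norm_sub_rev]
    exact Real.le_sqrt_of_sq_le (norm_sub_cfcₙ_mul_sq_le hle (Real.continuous_sqrt.mul (hc n))
      (by rw [h0, mul_zero]) fun t ht => mul_one_sub_sqrt_mul_approxInvSqrt_sq_le (hε n) ht)
  exact tendsto_nhds_unique (hl.star.mul hl) ((hunit.star.mul hunit).congr fun n =>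
    (star_mul_self_mul_cfcₙ_mul (hc n) (h0 n)).symm)

end Factorization

section Cutoff

variable {ε δ t : ℝ} {a : R}

@[fun_prop]
theorem continuous_cutoff (ε : ℝ) : Continuous (cutoff ε) := by
  unfold cutoff
  fun_prop

@[simp]
theorem cutoff_zero (ε : ℝ) : cutoff ε 0 = 0 := by simp [cutoff]

theorem cutoff_nonneg (ε t : ℝ) : 0 ≤ cutoff ε t := by simp [cutoff]

theorem cutoff_le_one (ε t : ℝ) : cutoff ε t ≤ 1 := by simp [cutoff]

theorem cutoff_eq_one (hε : 0 < ε) (h : ε ≤ t) : cutoff ε t = 1 := by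
  have : 1 ≤ 2 * t / ε - 1 := by
    rw [le_sub_iff_add_le, le_div_iff₀ hε]
    linarith
  exact min_eq_left (this.trans (le_max_right _ _))

theorem cutoff_eq_zero (hε : 0 < ε) (h : t ≤ ε / 2) : cutoff ε t = 0 := by
  have : 2 * t / ε - 1 ≤ 0 := by
    rw [sub_nonpos, div_le_iff₀ hε]
    linarith
  rw [cutoff, max_eq_left this, min_eq_right zero_le_one]

theorem cutoff_anti (hδ : 0 < δ) (h : δ ≤ ε) (ht : 0 ≤ t) : cutoff ε t ≤ cutoff δ t := by
  unfold cutoff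
  gcongr

theorem cutoff_mul_cutoff (hδ : 0 < δ) (h : δ ≤ ε / 2) :
    cutoff δ t * cutoff ε t = cutoff ε t := by
  rcases le_total t (ε / 2) with ht | ht
  · rw [cutoff_eq_zero (by linarith) ht, mul_zero]
  · rw [cutoff_eq_one hδ (h.trans ht), one_mul]

theorem fEps_nonneg (ha : 0 ≤ a) (ε : ℝ) : 0 ≤ fEps ε a :=
  cfcₙ_nonneg_of_nonneg ha fun t _ => cutoff_nonneg ε t

omit [PartialOrder R] [StarOrderedRing R] in
theorem isSelfAdjoint_fEps (ε : ℝ) (a : R) : IsSelfAdjoint (fEps ε a) := cfcₙ_predicate _ _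

theorem norm_fEps_le_one (ha : 0 ≤ a) (ε : ℝ) : ‖fEps ε a‖ ≤ 1 :=
  norm_cfcₙ_le_of_nonneg ha fun t _ => by
    rw [abs_of_nonneg (cutoff_nonneg ε t)]
    exact cutoff_le_one ε t

omit [PartialOrder R] [StarOrderedRing R] in
theorem fEps_mul_fEps (hδ : 0 < δ) (h : δ ≤ ε / 2) : fEps δ a * fEps ε a = fEps ε a := by
  unfold fEps
  rw [← cfcₙ_mul (cutoff δ) (cutoff ε) a]
  exact cfcₙ_congr fun _ _ => cutoff_mul_cutoff hδ h

theorem fEps_anti (ha : 0 ≤ a) (hδ : 0 < δ) (h : δ ≤ ε) : fEps ε a ≤ fEps δ a :=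
  cfcₙ_mono_of_nonneg ha (continuous_cutoff _) (cutoff_zero _) (continuous_cutoff _)
    (cutoff_zero _) fun _ ht => cutoff_anti hδ h ht

end Cutoff

/-! ### Intertwining -/

open scoped ContinuousMapZero in
omit [PartialOrder R] [StarOrderedRing R] in
theorem mul_cfcₙ_eq_cfcₙ_mul {a b x : R} (ha : IsSelfAdjoint a) (hb : IsSelfAdjoint b)
    (h : x * a = b * x) {f : ℝ → ℝ} (hf : Continuous f) (hf0 : f 0 = 0) :
    x * cfcₙ f a = cfcₙ f b * x := by
  set s := quasispectrum ℝ a ∪ quasispectrum ℝ b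
  have has : quasispectrum ℝ a ⊆ s := Set.subset_union_left
  have hbs : quasispectrum ℝ b ⊆ s := Set.subset_union_right
  have : Fact (0 ∈ s) := ⟨has (quasispectrum.zero_mem ℝ a)⟩
  have : CompactSpace s := isCompact_iff_compactSpace.1
    ((NonUnitalContinuousFunctionalCalculus.isCompact_quasispectrum a).union
      (NonUnitalContinuousFunctionalCalculus.isCompact_quasispectrum b))
  have key : ∀ F : C(s, ℝ)₀, x * cfcₙHomSuperset ha has F = cfcₙHomSuperset hb hbs F * x := by
    intro F
    induction F using ContinuousMapZero.induction_on_of_compact with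
    | zero => simp only [map_zero, mul_zero, zero_mul]
    | smul r F hF => rw [map_smul, map_smul, mul_smul_comm, hF, smul_mul_assoc]
    | id => rwa [cfcₙHomSuperset_id ha has, cfcₙHomSuperset_id hb hbs]
    | star_id =>
      rwa [map_star, map_star, cfcₙHomSuperset_id ha has, cfcₙHomSuperset_id hb hbs, ha.star_eq,
        hb.star_eq]
    | add F G hF hG => rw [map_add, map_add, mul_add, hF, hG, add_mul]
    | mul F G hF hG => rw [map_mul, map_mul, ← mul_assoc, hF, mul_assoc, hG, mul_assoc]
    | frequently F hF =>
      refine (isClosed_eq (f := fun G => x * cfcₙHomSuperset ha has G)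
        (g := fun G => cfcₙHomSuperset hb hbs G * x) ?_ ?_).mem_of_frequently_of_tendsto hF
        tendsto_id
      · exact (cfcₙHomSuperset_continuous ha has).const_mul x
      · exact (cfcₙHomSuperset_continuous hb hbs).mul_const x
  have hF := key ⟨⟨s.domRestrict f, hf.continuousOn.domRestrict⟩, hf0⟩
  rw [cfcₙHomSuperset_apply, cfcₙHomSuperset_apply] at hF
  rw [cfcₙ_apply f a, cfcₙ_apply f b]
  exact hF

omit [PartialOrder R] [StarOrderedRing R] in
theorem mul_cfcₙ_star_mul_self {f : ℝ → ℝ} (hf : Continuous f) (hf0 : f 0 = 0) (x : R) :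
    x * cfcₙ f (star x * x) = cfcₙ f (x * star x) * x :=
  mul_cfcₙ_eq_cfcₙ_mul (.star_mul_self x) (.mul_star_self x) (mul_assoc _ _ _).symm hf hf0

/-! ### Comparison up to a scalar -/

/-- The function `t ↦ (t - ε)₊`. -/
def posCut (ε t : ℝ) : ℝ := max (t - ε) 0

section PosCut

variable {ε t : ℝ}

@[fun_prop]
theorem continuous_posCut (ε : ℝ) : Continuous (posCut ε) := by
  unfold posCut
  fun_prop

theorem posCut_nonneg (ε t : ℝ) : 0 ≤ posCut ε t := le_max_right _ _

theorem posCut_eq_zero (h : t ≤ ε) : posCut ε t = 0 := max_eq_right (sub_nonpos.2 h)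

theorem posCut_eq_sub (h : ε ≤ t) : posCut ε t = t - ε := max_eq_left (sub_nonneg.2 h)

theorem posCut_zero (hε : 0 ≤ ε) : posCut ε 0 = 0 := posCut_eq_zero hε

theorem norm_sub_cfcₙ_posCut_le {a : R} (ha : 0 ≤ a) (hε : 0 ≤ ε) :
    ‖a - cfcₙ (posCut ε) a‖ ≤ ε := by
  have h0 := posCut_zero hε
  conv_lhs => enter [1, 1]; rw [← cfcₙ_id' ℝ a]
  rw [← cfcₙ_sub (fun t => t) (posCut ε) a]
  refine norm_cfcₙ_le_of_nonneg ha fun t ht => ?_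
  rcases le_total t ε with h | h
  · rwa [posCut_eq_zero h, sub_zero, abs_of_nonneg ht]
  · rw [posCut_eq_sub h, sub_sub_cancel, abs_of_nonneg hε]

end PosCut

/-- The relation `a ≤ b + κ·1` in the unitization of `R`, expressed inside `R` by compressing with
selfadjoint elements. -/
def LEUpTo (κ : ℝ) (a b : R) : Prop :=
  ∀ h : R, IsSelfAdjoint h → h * a * h ≤ h * b * h + κ • (h * h)

section LEUpTo

variable {a b c : R} {κ μ : ℝ}

theorem LEUpTo.of_le (hab : a ≤ b) (hκ : 0 ≤ κ) : LEUpTo κ a b := fun _ hh =>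
  (hh.conjugate_le_conjugate hab).trans
    (le_add_of_nonneg_right (smul_nonneg hκ hh.mul_self_nonneg))

theorem LEUpTo.of_norm_sub_le (ha : 0 ≤ a) (hb : 0 ≤ b) (hκ : ‖a - b‖ ≤ κ) : LEUpTo κ a b := by
  intro h hh
  have hdiff : h * (a - b) * h ≤ κ • (h * h) :=
    (conjugate_le_norm_smul hh (ha.isSelfAdjoint.sub hb.isSelfAdjoint)).trans <| by
      have := hh.mul_self_nonneg
      gcongr
  rwa [mul_sub, sub_mul, sub_le_iff_le_add'] at hdiff

theorem LEUpTo.trans (hab : LEUpTo κ a b) (hbc : LEUpTo μ b c) : LEUpTo (κ + μ) a c := by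
  intro h hh
  rw [add_smul, add_comm (κ • _), ← add_assoc]
  exact (hab h hh).trans (by gcongr; exact hbc h hh)

theorem LEUpTo.mono (hab : LEUpTo κ a b) (hκμ : κ ≤ μ) : LEUpTo μ a b := fun h hh =>
  (hab h hh).trans (by
    have := hh.mul_self_nonneg
    gcongr)

theorem LEUpTo.smul {C : ℝ} (hab : LEUpTo κ a b) (hC : 0 ≤ C) : LEUpTo (C * κ) (C • a) (C • b) := by
  intro h hh
  simpa only [smul_add, smul_smul, mul_smul_comm, smul_mul_assoc] using
    smul_le_smul_of_nonneg_left (hab h hh) hC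

theorem LEUpTo.smul_cfcₙ_mul_self_le {f : ℝ → ℝ} {δ : ℝ} (ha : 0 ≤ a) (hab : LEUpTo κ a b)
    (hf : Continuous f) (hf0 : f 0 = 0) (hsupp : ∀ t, 0 ≤ t → f t ≠ 0 → κ + δ ≤ t) :
    δ • (cfcₙ f a * cfcₙ f a) ≤ cfcₙ f a * b * cfcₙ f a := by
  have hlower : (κ + δ) • (cfcₙ f a * cfcₙ f a) ≤ cfcₙ f a * a * cfcₙ f a := by
    rw [cfcₙ_mul_self_mul_cfcₙ hf hf0 hf hf0 ha.isSelfAdjoint, ← cfcₙ_mul f f a,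
      ← cfcₙ_const_mul (κ + δ) (fun t => f t * f t) a]
    refine cfcₙ_mono_of_nonneg ha (by fun_prop) (by simp [hf0]) (by fun_prop) (by simp [hf0])
      fun t ht => ?_
    by_cases hft : f t = 0
    · simp [hft]
    · nlinarith [mul_self_nonneg (f t), hsupp t ht hft]
  have := hlower.trans (hab _ (cfcₙ_predicate f a))
  rwa [add_smul, add_comm, add_le_add_iff_right] at this

end LEUpTo

/-! ### Pre-quasitraces and monotonicity -/

/-- The algebraic properties of a quasitrace on the positive cone: positive homogeneity, additivity
on commuting elements, and the trace identity; semicontinuity and finiteness are left out. -/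
structure IsPreQuasiTrace (φ : R → ℝ≥0∞) : Prop where
  map_zero : φ 0 = 0
  map_smul : ∀ (r : ℝ) (a : R), 0 < r → 0 ≤ a → φ (r • a) = ENNReal.ofReal r * φ a
  map_add : ∀ a b : R, 0 ≤ a → 0 ≤ b → a * b = b * a → φ (a + b) = φ a + φ b
  map_star_mul_self : ∀ x : R, φ (star x * x) = φ (x * star x)

/-- The `i`-th layer of height `δ` of the identity, normalised to have values in `[0, 1]`: it rises
from `0` to `1` on `[iδ, (i+1)δ]`. -/
def slice (δ : ℝ) (i : ℕ) (t : ℝ) : ℝ := min (max (t / δ - i) 0) 1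

section Slice

variable {δ t : ℝ} {i : ℕ}

@[fun_prop]
theorem continuous_slice (δ : ℝ) (i : ℕ) : Continuous (slice δ i) := by
  unfold slice
  fun_prop

theorem slice_nonneg (δ : ℝ) (i : ℕ) (t : ℝ) : 0 ≤ slice δ i t :=
  le_min (le_max_right _ _) zero_le_one

theorem slice_le_one (δ : ℝ) (i : ℕ) (t : ℝ) : slice δ i t ≤ 1 := min_le_right _ _

theorem slice_eq_zero (hδ : 0 < δ) (ht : t ≤ i * δ) : slice δ i t = 0 := by
  have : t / δ - i ≤ 0 := by rwa [sub_nonpos, div_le_iff₀ hδ]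
  rw [slice, max_eq_right this, min_eq_left zero_le_one]

theorem slice_eq_one (hδ : 0 < δ) (ht : (i + 1) * δ ≤ t) : slice δ i t = 1 := by
  have : 1 ≤ t / δ - i := by
    rw [le_sub_iff_add_le', le_div_iff₀ hδ]
    exact ht
  exact min_eq_right (this.trans (le_max_left _ _))

theorem slice_zero (δ : ℝ) (i : ℕ) : slice δ i 0 = 0 := by
  have : (0 : ℝ) / δ - i ≤ 0 := by simp
  rw [slice, max_eq_right this, min_eq_left zero_le_one]

theorem sum_slice (hδ : 0 < δ) (N : ℕ) (t : ℝ) :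
    δ * ∑ i ∈ Finset.range N, slice δ i t = min (max t 0) (N * δ) := by
  induction N with
  | zero => simp
  | succ N ih =>
    rw [Finset.sum_range_succ, mul_add, ih]
    have hN : (0 : ℝ) ≤ N * δ := by positivity
    push_cast
    rcases le_total t (N * δ) with h | h
    · have hmax : max t 0 ≤ N * δ := max_le h hN
      rw [slice_eq_zero hδ h, mul_zero, add_zero, min_eq_left hmax, min_eq_left (by linarith)]
    rw [max_eq_left (hN.trans h), min_eq_right h]
    rcases le_total t ((N + 1) * δ) with h' | h'
    · have h0 : 0 ≤ t / δ - N := by rwa [sub_nonneg, le_div_iff₀ hδ]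
      have h1 : t / δ - N ≤ 1 := by rwa [sub_le_iff_le_add', div_le_iff₀ hδ]
      rw [min_eq_left h', slice, max_eq_left h0, min_eq_left h1]
      field_simp
      ring
    · rw [slice_eq_one hδ h', min_eq_right h']
      ring

theorem sum_slice_sub (hδ : 0 < δ) {ε : ℝ} {N : ℕ} (ht : t ≤ ε + N * δ) :
    δ * ∑ i ∈ Finset.range N, slice δ i (t - ε) = posCut ε t := by
  rw [sum_slice hδ, min_eq_left (max_le (by linarith) (by positivity)), posCut]

end Slice

namespace IsPreQuasiTrace

variable {φ : R → ℝ≥0∞} {f g : ℝ → ℝ} {a b w e z : R}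

theorem mono_of_commute (hφ : IsPreQuasiTrace φ) (ha : 0 ≤ a) (hab : a ≤ b) (hc : a * b = b * a) :
    φ a ≤ φ b := by
  have := hφ.map_add a (b - a) ha (sub_nonneg.2 hab) (by rw [mul_sub, sub_mul, hc])
  rw [add_sub_cancel] at this
  rw [this]
  exact le_self_add

theorem mono_cfcₙ (hφ : IsPreQuasiTrace φ) (ha : 0 ≤ a) (hf : Continuous f) (hf0 : f 0 = 0)
    (hg : Continuous g) (hg0 : g 0 = 0) (h0 : ∀ t, 0 ≤ t → 0 ≤ f t)
    (h : ∀ t, 0 ≤ t → f t ≤ g t) : φ (cfcₙ f a) ≤ φ (cfcₙ g a) :=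
  hφ.mono_of_commute (cfcₙ_nonneg_of_nonneg ha h0) (cfcₙ_mono_of_nonneg ha hf hf0 hg hg0 h)
    (cfcₙ_commute_cfcₙ f g a)

theorem map_le_map_mul_self (hφ : IsPreQuasiTrace φ) (hw : 0 ≤ w) (hw1 : ‖w‖ ≤ 1)
    (he : IsSelfAdjoint e) (hew : e * w = w) : φ w ≤ φ (e * e) := by
  have hwe : w * e = w := by
    simpa only [star_mul, he.star_eq, hw.isSelfAdjoint.star_eq] using congrArg star hew
  refine hφ.mono_of_commute hw ?_ (by rw [← mul_assoc, hwe, hwe, mul_assoc, hew, hew])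
  calc w = e * w * e := by rw [hew, hwe]
    _ ≤ ‖w‖ • (e * e) := conjugate_le_norm_smul he hw.isSelfAdjoint
    _ ≤ e * e := by
      simpa only [one_smul] using smul_le_smul_of_nonneg_right hw1 he.mul_self_nonneg

theorem map_le_of_smul_le (hφ : IsPreQuasiTrace φ) {h : R} (hn : ‖h‖ ≤ 1) {c : ℝ}
    (hc : 0 < c) (hle : c • (h * star h) ≤ star z * z) (he : IsSelfAdjoint e) (hez : e * z = z) :
    φ (star h * h) ≤ φ (e * e) := by
  have hle' : h * star h ≤ star ((√c)⁻¹ • z) * ((√c)⁻¹ • z) := by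
    rw [star_smul, smul_mul_smul_comm, star_trivial (√c)⁻¹, ← mul_inv, Real.mul_self_sqrt hc.le]
    simpa only [inv_smul_smul₀ hc.ne'] using
      smul_le_smul_of_nonneg_left hle (inv_nonneg.2 hc.le)
  obtain ⟨y, hy, hyh⟩ := exists_star_mul_self_eq_of_le hle'
  have hey : e * y = y := mul_eq_self_of_mem_closedRightIdeal (by rw [mul_smul_comm, hez]) hy
  rw [← hyh, hφ.map_star_mul_self]
  refine hφ.map_le_map_mul_self (mul_star_self_nonneg y) ?_ he (by rw [← mul_assoc, hey])
  rw [CStarRing.norm_self_mul_star, ← CStarRing.norm_star_mul_self, hyh,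
    CStarRing.norm_star_mul_self]
  exact mul_le_one₀ hn (norm_nonneg _) hn

theorem map_cfcₙ_le_of_leUpTo (hφ : IsPreQuasiTrace φ) {κ δ : ℝ} (ha : 0 ≤ a)
    (H : LEUpTo κ a (star z * z)) (he : IsSelfAdjoint e) (hez : e * z = z) (hf : Continuous f)
    (h0 : ∀ t, 0 ≤ f t) (h1 : ∀ t, f t ≤ 1) (hf0 : f 0 = 0) (hδ : 0 < δ)
    (hsupp : ∀ t, 0 ≤ t → f t ≠ 0 → κ + δ ≤ t) : φ (cfcₙ f a) ≤ φ (e * e) := by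
  set k := cfcₙ (fun t => √(f t)) a
  have hk : IsSelfAdjoint k := cfcₙ_predicate _ a
  have hkk : cfcₙ f a = star k * k := by
    rw [hk.star_eq, ← cfcₙ_mul (fun t => √(f t)) (fun t => √(f t)) a]
    exact cfcₙ_congr fun t _ => (Real.mul_self_sqrt (h0 t)).symm
  rw [hkk]
  refine hφ.map_le_of_smul_le (z := z * k) ?_ hδ ?_ he (by rw [← mul_assoc, hez])
  · refine norm_cfcₙ_le_of_nonneg ha fun t _ => ?_
    rw [abs_of_nonneg (Real.sqrt_nonneg _)]
    exact Real.sqrt_le_one.2 (h1 t)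
  · rw [star_mul, hk.star_eq, mul_assoc, ← mul_assoc (star z), ← mul_assoc]
    refine H.smul_cfcₙ_mul_self_le ha (by fun_prop) (by simp [hf0]) fun t ht hft => hsupp t ht ?_
    rintro h
    simp [h] at hft

theorem map_smul_cfcₙ_sum (hφ : IsPreQuasiTrace φ) (ha : 0 ≤ a) (f : ℕ → ℝ → ℝ)
    (hf : ∀ i, Continuous (f i)) (hf0 : ∀ i, f i 0 = 0) (h : ∀ i t, 0 ≤ f i t) {c : ℝ}
    (hc : 0 < c) (N : ℕ) :
    φ (cfcₙ (fun t => c * ∑ i ∈ Finset.range N, f i t) a)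
      = ENNReal.ofReal c * ∑ i ∈ Finset.range N, φ (cfcₙ (f i) a) := by
  rw [cfcₙ_const_mul c (fun t => ∑ i ∈ Finset.range N, f i t) a,
    hφ.map_smul _ _ hc (cfcₙ_nonneg fun t _ => Finset.sum_nonneg fun i _ => h i t)]
  congr 1
  induction N with
  | zero => simpa using hφ.map_zero
  | succ N ih =>
    simp only [Finset.sum_range_succ]
    rw [← ih, cfcₙ_add (fun t => ∑ i ∈ Finset.range N, f i t) (f N) a,
      hφ.map_add _ _ (cfcₙ_nonneg fun t _ => Finset.sum_nonneg fun i _ => h i t)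
        (cfcₙ_nonneg_of_nonneg ha fun t _ => h N t) (cfcₙ_commute_cfcₙ _ _ a)]

theorem sum_map_cfcₙ_slice_le (hφ : IsPreQuasiTrace φ) (ha : 0 ≤ a) {δ : ℝ} (hδ : 0 < δ) (N : ℕ) :
    ENNReal.ofReal δ * ∑ i ∈ Finset.range N, φ (cfcₙ (slice δ i) a) ≤ φ a := by
  rw [← hφ.map_smul_cfcₙ_sum ha _ (continuous_slice δ) (slice_zero δ) (slice_nonneg δ) hδ]
  conv_rhs => rw [← cfcₙ_id ℝ a]
  simp only [sum_slice hδ]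
  refine hφ.mono_cfcₙ ha (by fun_prop) ?_ continuous_id rfl (fun t ht => by positivity)
    fun t ht => ?_
  · rw [max_self, min_eq_left (by positivity)]
  · exact (min_le_left _ _).trans_eq (max_eq_left ht)

theorem map_cfcₙ_slice_le (hφ : IsPreQuasiTrace φ) (ha : 0 ≤ a) (hb : 0 ≤ b) {κ δ : ℝ}
    (hκ : 0 ≤ κ) (hδ : 0 < δ) (H : LEUpTo κ a b) (i : ℕ) :
    φ (cfcₙ (fun t => slice δ i (t - (κ + 2 * δ))) a) ≤ φ (cfcₙ (slice δ i) b) := by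
  have hc : 0 ≤ (i + 1) * δ := by positivity
  have hcut0 := posCut_zero hc
  have hs0 := slice_zero δ i
  have hcut : 0 ≤ cfcₙ (posCut ((i + 1) * δ)) b := cfcₙ_nonneg fun t _ => posCut_nonneg _ t
  have hsupp : ∀ t, t ≤ κ + (i + 2) * δ → slice δ i (t - (κ + 2 * δ)) = 0 := fun t ht =>
    slice_eq_zero hδ (by linarith)
  have hz : cfcₙ (posCut ((i + 1) * δ)) b
      = star (cfcₙ (fun t => √(posCut ((i + 1) * δ) t)) b)
        * cfcₙ (fun t => √(posCut ((i + 1) * δ) t)) b := by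
    rw [star_cfcₙ, ← cfcₙ_mul (fun t => √(posCut ((i + 1) * δ) t)) _ b]
    exact cfcₙ_congr fun t _ => (Real.mul_self_sqrt (posCut_nonneg _ t)).symm
  have hslice : cfcₙ (slice δ i) b
      = cfcₙ (fun t => √(slice δ i t)) b * cfcₙ (fun t => √(slice δ i t)) b := by
    rw [← cfcₙ_mul (fun t => √(slice δ i t)) _ b]
    exact cfcₙ_congr fun t _ => (Real.mul_self_sqrt (slice_nonneg δ i t)).symm
  have hκc := H.trans (LEUpTo.of_norm_sub_le hb hcut (norm_sub_cfcₙ_posCut_le hb hc))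
  rw [hslice]
  refine hφ.map_cfcₙ_le_of_leUpTo (δ := δ) ha (hz ▸ hκc) (cfcₙ_predicate _ b) ?_ (by fun_prop)
    (fun t => slice_nonneg _ _ _) (fun t => slice_le_one _ _ _) (hsupp 0 (by positivity)) hδ
    fun t _ ht => ?_
  · rw [← cfcₙ_mul (fun t => √(slice δ i t)) (fun t => √(posCut ((i + 1) * δ) t)) b]
    refine cfcₙ_congr fun t _ => ?_
    rcases le_total t ((i + 1) * δ) with h | h
    · simp [posCut_eq_zero h]
    · simp [slice_eq_one hδ h]
  · by_contra! hlt
    exact ht (hsupp t (by linarith))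

/-- Pre-quasitraces are not known to be monotone; cutting both sides into thin layers and comparing
layer by layer shows that they are monotone up to a cut-down. -/
theorem map_cfcₙ_posCut_le (hφ : IsPreQuasiTrace φ) (ha : 0 ≤ a) (hb : 0 ≤ b) {κ ε : ℝ}
    (hκ : 0 ≤ κ) (hε : κ < ε) (H : LEUpTo κ a b) : φ (cfcₙ (posCut ε) a) ≤ φ b := by
  obtain ⟨δ, hδ, rfl⟩ : ∃ δ : ℝ, 0 < δ ∧ ε = κ + 2 * δ := ⟨(ε - κ) / 2, by linarith, by ring⟩
  obtain ⟨N, hN⟩ := exists_nat_gt (‖a‖ / δ)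
  rw [div_lt_iff₀ hδ] at hN
  have hslices : cfcₙ (posCut (κ + 2 * δ)) a
      = cfcₙ (fun t => δ * ∑ i ∈ Finset.range N, slice δ i (t - (κ + 2 * δ))) a :=
    cfcₙ_congr fun t ht => (sum_slice_sub hδ
      (by linarith [le_norm_of_mem_quasispectrum ha.isSelfAdjoint ht])).symm
  rw [hslices, hφ.map_smul_cfcₙ_sum ha (fun i t => slice δ i (t - (κ + 2 * δ)))
    (fun i => by fun_prop) (fun i => slice_eq_zero hδ (by nlinarith [i.cast_nonneg (α := ℝ)]))
    (fun i t => slice_nonneg _ _ _) hδ]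
  refine le_trans ?_ (hφ.sum_map_cfcₙ_slice_le hb hδ N)
  gcongr with i
  exact hφ.map_cfcₙ_slice_le ha hb hκ hδ H i

end IsPreQuasiTrace

/-! ### Dimension functions -/

theorem norm_sub_conjugate_fEps_le {b : R} (hb : 0 ≤ b) {ε : ℝ} (hε : 0 < ε) :
    ‖b - fEps ε b * b * fEps ε b‖ ≤ ε := by
  have hcut : b - fEps ε b * b * fEps ε b
      = cfcₙ (fun t => t - cutoff ε t * t * cutoff ε t) b := by
    rw [fEps, cfcₙ_mul_self_mul_cfcₙ (continuous_cutoff ε) (cutoff_zero ε) (continuous_cutoff ε)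
      (cutoff_zero ε) hb.isSelfAdjoint]
    conv_lhs => enter [1]; rw [← cfcₙ_id' ℝ b]
    rw [← cfcₙ_sub (fun t => t) (fun t => cutoff ε t * t * cutoff ε t) b]
  rw [hcut]
  refine norm_cfcₙ_le_of_nonneg hb fun t ht => ?_
  have h0 := cutoff_nonneg ε t
  have h1 := cutoff_le_one ε t
  rcases le_total ε t with h | h
  · simpa [cutoff_eq_one hε h] using hε.le
  · rw [abs_of_nonneg (by nlinarith [mul_le_one₀ h1 h0 h1])]
    nlinarith [mul_nonneg ht (mul_nonneg h0 h0)]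

omit [PartialOrder R] [StarOrderedRing R] in
theorem CuntzLE.exists_norm_sub_le {y b : R} (H : CuntzLE y b) {κ : ℝ} (hκ : 0 < κ) :
    ∃ r : R, ‖y - star r * b * r‖ ≤ κ := by
  obtain ⟨x, hx⟩ := H
  obtain ⟨n, hn⟩ := (hx.eventually (gt_mem_nhds hκ)).exists
  exact ⟨x n, hn.le⟩

theorem LEUpTo.conjugate_fEps {y b r : R} {κ ε δ : ℝ} (hb : 0 ≤ b) (hε : 0 < ε)
    (H : LEUpTo κ y (star r * b * r)) (hδ : ‖r‖ * ε * ‖r‖ ≤ δ) :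
    LEUpTo (κ + δ) y (star r * (fEps ε b * b * fEps ε b) * r) := by
  have hconj : 0 ≤ fEps ε b * b * fEps ε b :=
    (isSelfAdjoint_fEps ε b).conjugate_nonneg hb
  refine H.trans (.of_norm_sub_le (star_left_conjugate_nonneg hb r)
    (star_left_conjugate_nonneg hconj r) ?_)
  rw [← sub_mul, ← mul_sub]
  calc ‖star r * (b - fEps ε b * b * fEps ε b) * r‖
      ≤ ‖star r‖ * ‖b - fEps ε b * b * fEps ε b‖ * ‖r‖ :=
        (norm_mul_le _ _).trans (by gcongr; exact norm_mul_le _ _)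
    _ ≤ ‖r‖ * ε * ‖r‖ := by
        rw [norm_star]
        gcongr
        exact norm_sub_conjugate_fEps_le hb hε
    _ ≤ δ := hδ

/-- The dimension function `d_φ(a) = lim_{ε → 0} φ(f_ε(a))` of a function on the positive cone;
`dTau τ` is `dimFun τ.toFun`. -/
def dimFun (φ : R → ℝ≥0∞) (a : R) : ℝ≥0∞ := ⨆ n : ℕ, φ (fEps (1 / (n + 1)) a)

namespace IsPreQuasiTrace

variable {φ : R → ℝ≥0∞} {a b y : R} {ε : ℝ}

theorem map_fEps_le_dimFun (hφ : IsPreQuasiTrace φ) (ha : 0 ≤ a) (hε : 0 < ε) :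
    φ (fEps ε a) ≤ dimFun φ a := by
  obtain ⟨n, hn⟩ := exists_nat_one_div_lt hε
  exact (hφ.mono_cfcₙ ha (continuous_cutoff _) (cutoff_zero _) (continuous_cutoff _)
    (cutoff_zero _) (fun t _ => cutoff_nonneg _ t)
    fun t ht => cutoff_anti (by positivity) hn.le ht).trans (le_iSup_iff.2 fun _ h => h n)

theorem map_fEps_mul_self_le (hφ : IsPreQuasiTrace φ) (ha : 0 ≤ a) :
    φ (fEps ε a * fEps ε a) ≤ φ (fEps ε a) := by
  rw [fEps, ← cfcₙ_mul (cutoff ε) (cutoff ε) a]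
  exact hφ.mono_cfcₙ ha (by fun_prop) (by simp) (by fun_prop) (cutoff_zero ε)
    (fun t _ => mul_self_nonneg _) fun t _ =>
    mul_le_of_le_one_left (cutoff_nonneg ε t) (cutoff_le_one ε t)

theorem dimFun_le_of_leUpTo (hφ : IsPreQuasiTrace φ) (hy : 0 ≤ y) (hb : 0 ≤ b)
    (H : ∀ κ : ℝ, 0 < κ → ∃ r : R, LEUpTo κ y (star r * b * r)) : dimFun φ y ≤ dimFun φ b := by
  refine iSup_le fun n => ?_
  set δ : ℝ := 1 / (n + 1)
  have hδ : 0 < δ := by positivity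
  obtain ⟨r, hr⟩ := H (δ / 8) (by positivity)
  set ε : ℝ := δ / 8 / (‖r‖ * ‖r‖ + 1) with hεdef
  have hε : 0 < ε := by positivity
  have hrε : ‖r‖ * ε * ‖r‖ ≤ δ / 8 := by
    have : ε * (‖r‖ * ‖r‖ + 1) = δ / 8 := by rw [hεdef]; field_simp
    nlinarith
  obtain ⟨q, hq, rfl⟩ := exists_isSelfAdjoint_mul_self_eq hb
  set p := fEps ε (q * q)
  set e := fEps (ε / 2) (q * q)
  have hp : IsSelfAdjoint p := isSelfAdjoint_fEps _ _
  have hep : e * p = p := fEps_mul_fEps (by positivity) le_rfl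
  have hqe : q * e = e * q :=
    mul_cfcₙ_eq_cfcₙ_mul hb.isSelfAdjoint hb.isSelfAdjoint (mul_assoc _ _ _).symm
      (continuous_cutoff _) (cutoff_zero _)
  have hz : star r * (p * (q * q) * p) * r = star (q * p * r) * (q * p * r) := by
    simp only [star_mul, hq.star_eq, hp.star_eq, mul_assoc]
  have hle := hr.conjugate_fEps hb hε hrε
  rw [hz] at hle
  have hez : e * (q * p * r) = q * p * r := by
    rw [← mul_assoc, ← mul_assoc, ← hqe, mul_assoc q, hep]
  calc φ (fEps δ y) ≤ φ (e * e) :=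
        hφ.map_cfcₙ_le_of_leUpTo hy hle (isSelfAdjoint_fEps _ _) hez (continuous_cutoff δ)
          (cutoff_nonneg δ) (cutoff_le_one δ) (cutoff_zero δ) (δ := δ / 4) (by positivity)
          fun t _ hft => by
            by_contra! hlt
            exact hft (cutoff_eq_zero hδ (by linarith))
    _ ≤ φ e := hφ.map_fEps_mul_self_le hb
    _ ≤ dimFun φ (q * q) := hφ.map_fEps_le_dimFun hb (by positivity)

theorem dimFun_le_of_le_smul (hφ : IsPreQuasiTrace φ) (hy : 0 ≤ y) (hb : 0 ≤ b) {C : ℝ}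
    (hC : 0 ≤ C) (h : y ≤ C • b) : dimFun φ y ≤ dimFun φ b := by
  refine hφ.dimFun_le_of_leUpTo hy hb fun κ hκ => ?_
  set p := fEps (κ / (C + 1)) b
  have hp : IsSelfAdjoint p := isSelfAdjoint_fEps _ _
  refine ⟨√C • p, ?_⟩
  have hconj : star (√C • p) * b * (√C • p) = C • (p * b * p) := by
    rw [star_smul, star_trivial √C, hp.star_eq, smul_mul_assoc, smul_mul_smul_comm,
      Real.mul_self_sqrt hC]
  have hbp := (LEUpTo.of_norm_sub_le hb (hp.conjugate_nonneg hb)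
    (norm_sub_conjugate_fEps_le hb (by positivity : 0 < κ / (C + 1)))).smul hC
  rw [hconj]
  refine ((LEUpTo.of_le h le_rfl).trans hbp).mono ?_
  rw [zero_add, mul_div_assoc', div_le_iff₀ (by positivity)]
  nlinarith

omit [StarOrderedRing R] in
theorem map_cfcₙ_star_mul_self (hφ : IsPreQuasiTrace φ) {k : ℝ → ℝ} (hk : Continuous k)
    (hk0 : k 0 = 0) (s : R) :
    φ (cfcₙ (fun t => k t * t * k t) (star s * s))
      = φ (cfcₙ (fun t => k t * t * k t) (s * star s)) := by
  rw [← cfcₙ_mul_self_mul_cfcₙ hk hk0 hk hk0 (.star_mul_self s),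
    ← cfcₙ_mul_self_mul_cfcₙ hk hk0 hk hk0 (.mul_star_self s)]
  have hintertwine := mul_cfcₙ_star_mul_self hk hk0 s
  have hstar : cfcₙ k (star s * s) * star s = star s * cfcₙ k (s * star s) := by
    simpa only [star_mul, star_cfcₙ] using congrArg star hintertwine
  calc φ (cfcₙ k (star s * s) * (star s * s) * cfcₙ k (star s * s))
      = φ (star (s * cfcₙ k (star s * s)) * (s * cfcₙ k (star s * s))) := by
        simp only [star_mul, star_cfcₙ, mul_assoc]
    _ = φ (s * cfcₙ k (star s * s) * star (s * cfcₙ k (star s * s))) := hφ.map_star_mul_self _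
    _ = φ (cfcₙ k (s * star s) * (s * star s) * cfcₙ k (s * star s)) := by
        rw [star_mul, star_cfcₙ, hstar, hintertwine]
        simp only [mul_assoc]

omit [StarOrderedRing R] in
theorem map_cfcₙ_star_mul_self_of_eq_zero (hφ : IsPreQuasiTrace φ) {f : ℝ → ℝ} (hf : Continuous f)
    (hf0 : ∀ t, 0 ≤ f t) (hε : 0 < ε) (hfε : ∀ t ≤ ε, f t = 0) (s : R) :
    φ (cfcₙ f (star s * s)) = φ (cfcₙ f (s * star s)) := by
  set k : ℝ → ℝ := fun t => √(f t / max t ε)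
  have hden : ∀ t, 0 < max t ε := fun t => lt_max_of_lt_right hε
  have hk : Continuous k := (hf.div (by fun_prop) fun t => (hden t).ne').sqrt
  have hfk : f = fun t => k t * t * k t := by
    funext t
    rw [mul_right_comm, Real.mul_self_sqrt (div_nonneg (hf0 t) (hden t).le)]
    rcases le_total t ε with h | h
    · simp [hfε t h]
    · rw [max_eq_left h, div_mul_cancel₀ _ (by linarith)]
  rw [hfk]
  exact hφ.map_cfcₙ_star_mul_self hk (by simp [k, hfε 0 hε.le]) s

omit [StarOrderedRing R] in
theorem dimFun_star_mul_self (hφ : IsPreQuasiTrace φ) (s : R) :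
    dimFun φ (star s * s) = dimFun φ (s * star s) :=
  iSup_congr fun _ => hφ.map_cfcₙ_star_mul_self_of_eq_zero (continuous_cutoff _)
    (cutoff_nonneg _) (by positivity) (fun _ ht => cutoff_eq_zero (by positivity) ht) s

end IsPreQuasiTrace

/-! ### Lower semicontinuous regularisation -/

omit [PartialOrder R] [StarOrderedRing R] in
theorem isStarNormal_add_I_smul {a b : R} (ha : IsSelfAdjoint a) (hb : IsSelfAdjoint b)
    (hab : a * b = b * a) : IsStarNormal (a + Complex.I • b) := by
  refine ⟨?_⟩
  simp only [commute_iff_eq, star_add, star_smul, ha.star_eq, hb.star_eq, add_mul, mul_add,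
    smul_mul_assoc, mul_smul_comm, hab, Complex.star_def, Complex.conj_I, neg_smul, neg_mul,
    mul_neg, smul_add, smul_neg]
  abel

open scoped ComplexOrder in
/-- Commuting `a` and `b` are the real and imaginary parts of the normal element `a + ib`, whose
functional calculus reduces the claim to an inequality between functions. -/
theorem cfcₙ_add_le_of_superadditive {f : ℝ → ℝ} (hf : Continuous f) (hf0 : f 0 = 0)
    (hadd : ∀ s t : ℝ, 0 ≤ s → 0 ≤ t → f s + f t ≤ f (s + t)) {a b : R} (ha : 0 ≤ a) (hb : 0 ≤ b)
    (hab : a * b = b * a) : cfcₙ f a + cfcₙ f b ≤ cfcₙ f (a + b) := by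
  obtain ⟨z, hz, rfl, rfl⟩ : ∃ z : R, IsStarNormal z ∧ (realPart z : R) = a ∧
      (imaginaryPart z : R) = b :=
    ⟨a + Complex.I • b, isStarNormal_add_I_smul ha.isSelfAdjoint hb.isSelfAdjoint hab,
      by simp [ha.isSelfAdjoint.coe_realPart, hb.isSelfAdjoint.imaginaryPart],
      by simp [hb.isSelfAdjoint.coe_realPart, ha.isSelfAdjoint.imaginaryPart]⟩
  have hnonneg (w : ℂ) (hw : w ∈ quasispectrum ℂ z) : 0 ≤ w.re ∧ 0 ≤ w.im :=
    ⟨quasispectrum_nonneg_of_nonneg _ ha _ (quasispectrum_realPart' z ▸ ⟨w, hw, rfl⟩),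
      quasispectrum_nonneg_of_nonneg _ hb _ (quasispectrum_imaginaryPart' z ▸ ⟨w, hw, rfl⟩)⟩
  have hsum : cfcₙ f ((realPart z : R) + imaginaryPart z)
      = cfcₙ (fun w : ℂ => (f (w.re + w.im) : ℂ)) z := by
    have hz_add : cfcₙ (fun w : ℂ => ((w.re + w.im : ℝ) : ℂ)) z
        = (realPart z : R) + imaginaryPart z := by
      simp only [Complex.ofReal_add]
      rw [cfcₙ_add (fun w : ℂ => (w.re : ℂ)) (fun w : ℂ => (w.im : ℂ)) z, cfcₙ_re_id z,
        cfcₙ_im_id z]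
    rw [cfcₙ_real_eq_complex f (ha.isSelfAdjoint.add hb.isSelfAdjoint), ← hz_add,
      ← cfcₙ_comp' (fun w : ℂ => (f w.re : ℂ)) (fun w : ℂ => ((w.re + w.im : ℝ) : ℂ)) z
        (by fun_prop) (by simp [hf0]) (by fun_prop) (by simp)]
    simp only [Complex.ofReal_re]
  rw [hsum, ← cfcₙ_comp_re f z, ← cfcₙ_comp_im f z,
    ← cfcₙ_add (fun w : ℂ => (f w.re : ℂ)) (fun w : ℂ => (f w.im : ℂ)) z
      (by fun_prop) (by simp [hf0]) (by fun_prop) (by simp [hf0])]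
  refine cfcₙ_mono (fun w hw => ?_) (by fun_prop) (by fun_prop) (by simp [hf0]) (by simp [hf0])
  exact_mod_cast hadd _ _ (hnonneg w hw).1 (hnonneg w hw).2

theorem cfcₙ_smul_posCut {a : R} (ha : 0 ≤ a) {r : ℝ} (hr : 0 < r) {ε : ℝ} (hε : 0 < ε) :
    cfcₙ (posCut ε) (r • a) = r • cfcₙ (posCut (ε / r)) a := by
  have hε0 := posCut_zero hε.le
  have hεr0 := posCut_zero (div_pos hε hr).le
  rw [← cfcₙ_comp_smul r (posCut ε) a, ← cfcₙ_const_mul r (posCut (ε / r)) a]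
  congr 1 with t
  rw [smul_eq_mul, posCut, posCut, mul_max_of_nonneg _ _ hr.le, mul_sub, mul_div_cancel₀ _ hr.ne',
    mul_zero]

theorem cfcₙ_posCut_nonneg {a : R} (ha : 0 ≤ a) (ε : ℝ) : 0 ≤ cfcₙ (posCut ε) a :=
  cfcₙ_nonneg_of_nonneg ha fun t _ => posCut_nonneg ε t

theorem cfcₙ_posCut_add_le {a b : R} (ha : 0 ≤ a) (hb : 0 ≤ b) (hab : a * b = b * a) {ε : ℝ}
    (hε : 0 ≤ ε) : cfcₙ (posCut ε) a + cfcₙ (posCut ε) b ≤ cfcₙ (posCut ε) (a + b) := by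
  refine cfcₙ_add_le_of_superadditive (continuous_posCut ε) (posCut_zero hε)
    (fun s t hs ht => ?_) ha hb hab
  simp only [posCut]
  grind

/-- The lower semicontinuous regularisation `a ↦ sup_{ε > 0} φ((a - ε)₊)` of a function on the
positive cone, normalised to vanish off the cone. -/
def lscReg (φ : R → ℝ≥0∞) : R → ℝ≥0∞ :=
  {a : R | 0 ≤ a}.indicator fun a => ⨆ ε : Set.Ioi (0 : ℝ), φ (cfcₙ (posCut ε) a)

section LscReg

variable {φ : R → ℝ≥0∞} {a b : R}

omit [StarOrderedRing R] in
theorem lscReg_of_nonneg (φ : R → ℝ≥0∞) (ha : 0 ≤ a) :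
    lscReg φ a = ⨆ ε : Set.Ioi (0 : ℝ), φ (cfcₙ (posCut ε) a) :=
  Set.indicator_of_mem (s := {a : R | 0 ≤ a}) ha _

omit [StarOrderedRing R] in
theorem lscReg_of_not_nonneg (φ : R → ℝ≥0∞) (ha : ¬ 0 ≤ a) : lscReg φ a = 0 :=
  Set.indicator_of_notMem (s := {a : R | 0 ≤ a}) ha _

omit [StarOrderedRing R] in
theorem map_cfcₙ_posCut_le_lscReg (φ : R → ℝ≥0∞) (ha : 0 ≤ a) {ε : ℝ} (hε : 0 < ε) :
    φ (cfcₙ (posCut ε) a) ≤ lscReg φ a := by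
  rw [lscReg_of_nonneg φ ha]
  exact le_iSup (fun ε : Set.Ioi (0 : ℝ) => φ (cfcₙ (posCut ε) a)) ⟨ε, hε⟩

omit [StarOrderedRing R] in
theorem lscReg_le (ha : 0 ≤ a) {C : ℝ≥0∞} (h : ∀ ε : ℝ, 0 < ε → φ (cfcₙ (posCut ε) a) ≤ C) :
    lscReg φ a ≤ C := by
  rw [lscReg_of_nonneg φ ha]
  exact iSup_le fun ε => h ε ε.2

theorem le_lscReg_of_lowerSemicontinuousOn (hl : LowerSemicontinuousOn φ {a : R | 0 ≤ a})
    (ha : 0 ≤ a) : φ a ≤ lscReg φ a := by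
  refine le_of_forall_lt fun c hc => ?_
  have hnear := hl a ha c hc
  rw [eventually_nhdsWithin_iff, Metric.eventually_nhds_iff] at hnear
  obtain ⟨δ, hδ, hlt⟩ := hnear
  refine (hlt (y := cfcₙ (posCut (δ / 2)) a) ?_ (cfcₙ_posCut_nonneg ha _)).trans_le
    (map_cfcₙ_posCut_le_lscReg φ ha (half_pos hδ))
  rw [dist_comm, dist_eq_norm]
  exact (norm_sub_cfcₙ_posCut_le ha (half_pos hδ).le).trans_lt (half_lt_self hδ)

theorem mul_cutoff_le_posCut_cutoff {θ ε : ℝ} (hθ : 0 ≤ θ) (hε : 0 < ε) (t : ℝ) :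
    θ * cutoff ε t ≤ posCut (1 - θ) (cutoff (ε / 2) t) := by
  rcases le_total t (ε / 2) with h | h
  · rw [cutoff_eq_zero hε h, mul_zero]
    exact posCut_nonneg _ _
  · rw [cutoff_eq_one (half_pos hε) h, posCut_eq_sub (by linarith)]
    nlinarith [cutoff_le_one ε t]

namespace IsPreQuasiTrace

theorem lscReg_le_self (hφ : IsPreQuasiTrace φ) (ha : 0 ≤ a) : lscReg φ a ≤ φ a :=
  lscReg_le ha fun _ hε => hφ.map_cfcₙ_posCut_le ha ha le_rfl hε (.of_le le_rfl le_rfl)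

theorem lscReg_mono (hφ : IsPreQuasiTrace φ) (ha : 0 ≤ a) (hab : a ≤ b) :
    lscReg φ a ≤ lscReg φ b := by
  have hb := ha.trans hab
  refine lscReg_le ha fun ε hε => ?_
  have hcut : LEUpTo (0 + ε / 2) a (cfcₙ (posCut (ε / 2)) b) :=
    (LEUpTo.of_le hab le_rfl).trans
      (.of_norm_sub_le hb (cfcₙ_posCut_nonneg hb _) (norm_sub_cfcₙ_posCut_le hb (half_pos hε).le))
  exact (hφ.map_cfcₙ_posCut_le ha (cfcₙ_posCut_nonneg hb _) (by positivity) (by linarith)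
    hcut).trans (map_cfcₙ_posCut_le_lscReg φ hb (half_pos hε))

theorem mono_of_lowerSemicontinuousOn (hφ : IsPreQuasiTrace φ)
    (hl : LowerSemicontinuousOn φ {a : R | 0 ≤ a}) (ha : 0 ≤ a) (hab : a ≤ b) : φ a ≤ φ b :=
  calc φ a ≤ lscReg φ a := le_lscReg_of_lowerSemicontinuousOn hl ha
    _ ≤ lscReg φ b := hφ.lscReg_mono ha hab
    _ ≤ φ b := hφ.lscReg_le_self (ha.trans hab)

theorem map_cfcₙ_posCut_add (hφ : IsPreQuasiTrace φ) (ha : 0 ≤ a) (hb : 0 ≤ b)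
    (hab : a * b = b * a) (ε : ℝ) : φ (cfcₙ (posCut ε) a + cfcₙ (posCut ε) b)
      = φ (cfcₙ (posCut ε) a) + φ (cfcₙ (posCut ε) b) :=
  hφ.map_add _ _ (cfcₙ_posCut_nonneg ha _) (cfcₙ_posCut_nonneg hb _)
    (((show Commute a b from hab).cfcₙ_real _).symm.cfcₙ_real _).symm

theorem lscReg_smul_le (hφ : IsPreQuasiTrace φ) {r : ℝ} (hr : 0 < r) (ha : 0 ≤ a) :
    lscReg φ (r • a) ≤ ENNReal.ofReal r * lscReg φ a := by
  refine lscReg_le (smul_nonneg hr.le ha) fun ε hε => ?_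
  rw [cfcₙ_smul_posCut ha hr hε, hφ.map_smul _ _ hr (cfcₙ_posCut_nonneg ha _)]
  gcongr
  exact map_cfcₙ_posCut_le_lscReg φ ha (div_pos hε hr)

theorem lscReg_add_le (hφ : IsPreQuasiTrace φ) (ha : 0 ≤ a) (hb : 0 ≤ b) (hab : a * b = b * a) :
    lscReg φ (a + b) ≤ lscReg φ a + lscReg φ b := by
  refine lscReg_le (add_nonneg ha hb) fun ε hε => ?_
  have hε4 : 0 < ε / 4 := by positivity
  have hcut := add_nonneg (cfcₙ_posCut_nonneg ha (ε / 4)) (cfcₙ_posCut_nonneg hb (ε / 4))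
  have hnorm : ‖a + b - (cfcₙ (posCut (ε / 4)) a + cfcₙ (posCut (ε / 4)) b)‖ ≤ ε / 2 := by
    rw [add_sub_add_comm]
    refine (norm_add_le _ _).trans ?_
    linarith [norm_sub_cfcₙ_posCut_le ha hε4.le, norm_sub_cfcₙ_posCut_le hb hε4.le]
  calc φ (cfcₙ (posCut ε) (a + b))
      ≤ φ (cfcₙ (posCut (ε / 4)) a + cfcₙ (posCut (ε / 4)) b) :=
        hφ.map_cfcₙ_posCut_le (add_nonneg ha hb) hcut (half_pos hε).le (half_lt_self hε)
          (.of_norm_sub_le (add_nonneg ha hb) hcut hnorm)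
    _ = φ (cfcₙ (posCut (ε / 4)) a) + φ (cfcₙ (posCut (ε / 4)) b) :=
        hφ.map_cfcₙ_posCut_add ha hb hab _
    _ ≤ lscReg φ a + lscReg φ b :=
        add_le_add (map_cfcₙ_posCut_le_lscReg φ ha hε4) (map_cfcₙ_posCut_le_lscReg φ hb hε4)

theorem map_cfcₙ_posCut_anti (hφ : IsPreQuasiTrace φ) (ha : 0 ≤ a) {δ ε : ℝ} (hδ : 0 ≤ δ)
    (hδε : δ ≤ ε) : φ (cfcₙ (posCut ε) a) ≤ φ (cfcₙ (posCut δ) a) :=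
  hφ.mono_cfcₙ ha (continuous_posCut ε) (posCut_zero (hδ.trans hδε)) (continuous_posCut δ)
    (posCut_zero hδ) (fun t _ => posCut_nonneg ε t) fun _ _ => by unfold posCut; gcongr

theorem le_lscReg_add (hφ : IsPreQuasiTrace φ) (ha : 0 ≤ a) (hb : 0 ≤ b) (hab : a * b = b * a) :
    lscReg φ a + lscReg φ b ≤ lscReg φ (a + b) := by
  rw [lscReg_of_nonneg φ ha, lscReg_of_nonneg φ hb]
  refine ENNReal.iSup_add_iSup_le fun ⟨ε, hε⟩ ⟨δ, hδ⟩ => ?_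
  have hpos : 0 < min ε δ := lt_min hε hδ
  have hcomm : Commute a (a + b) := (Commute.refl a).add_right hab
  have hcomm' : Commute b (a + b) := (show Commute b a from hab.symm).add_right (Commute.refl b)
  calc φ (cfcₙ (posCut ε) a) + φ (cfcₙ (posCut δ) b)
      ≤ φ (cfcₙ (posCut (min ε δ)) a) + φ (cfcₙ (posCut (min ε δ)) b) :=
        add_le_add (hφ.map_cfcₙ_posCut_anti ha hpos.le (min_le_left _ _))
          (hφ.map_cfcₙ_posCut_anti hb hpos.le (min_le_right _ _))
    _ = φ (cfcₙ (posCut (min ε δ)) a + cfcₙ (posCut (min ε δ)) b) :=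
        (hφ.map_cfcₙ_posCut_add ha hb hab _).symm
    _ ≤ φ (cfcₙ (posCut (min ε δ)) (a + b)) :=
        hφ.mono_of_commute (add_nonneg (cfcₙ_posCut_nonneg ha _) (cfcₙ_posCut_nonneg hb _))
          (cfcₙ_posCut_add_le ha hb hab hpos.le)
          (((hcomm.cfcₙ_real _).add_left (hcomm'.cfcₙ_real _)).symm.cfcₙ_real _).symm
    _ ≤ lscReg φ (a + b) := map_cfcₙ_posCut_le_lscReg φ (add_nonneg ha hb) hpos

theorem lscReg (hφ : IsPreQuasiTrace φ) : IsPreQuasiTrace (lscReg φ) where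
  map_zero := le_bot_iff.1 <| (hφ.lscReg_le_self le_rfl).trans hφ.map_zero.le
  map_smul r a hr ha := by
    refine le_antisymm (hφ.lscReg_smul_le hr ha) ?_
    have hinv := hφ.lscReg_smul_le (inv_pos.2 hr) (smul_nonneg hr.le ha)
    rw [inv_smul_smul₀ hr.ne', ENNReal.ofReal_inv_of_pos hr] at hinv
    rwa [mul_comm, ← ENNReal.le_div_iff_mul_le (by simp [hr]) (by simp), ENNReal.div_eq_inv_mul]
  map_add a b ha hb hab := (hφ.lscReg_add_le ha hb hab).antisymm (hφ.le_lscReg_add ha hb hab)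
  map_star_mul_self x := by
    rw [lscReg_of_nonneg φ (star_mul_self_nonneg x), lscReg_of_nonneg φ (mul_star_self_nonneg x)]
    exact iSup_congr fun ε => hφ.map_cfcₙ_star_mul_self_of_eq_zero (continuous_posCut ε)
      (posCut_nonneg ε) ε.2 (fun _ ht => posCut_eq_zero ht) x

theorem lowerSemicontinuousOn_lscReg (hφ : IsPreQuasiTrace φ) :
    LowerSemicontinuousOn (Paper.lscReg φ) {a : R | 0 ≤ a} := by
  intro a (ha : 0 ≤ a) c hc
  rw [lscReg_of_nonneg φ ha] at hc
  obtain ⟨⟨ε, hε : 0 < ε⟩, hcε⟩ := lt_iSup_iff.1 hc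
  rw [eventually_nhdsWithin_iff, Metric.eventually_nhds_iff]
  refine ⟨ε / 4, by positivity, fun y hy (hy0 : 0 ≤ y) => hcε.trans_le ?_⟩
  have hnorm : ‖a - cfcₙ (posCut (ε / 2)) y‖ ≤ 3 * ε / 4 := by
    rw [dist_comm, dist_eq_norm] at hy
    linarith [norm_sub_le_norm_sub_add_norm_sub a y (cfcₙ (posCut (ε / 2)) y),
      norm_sub_cfcₙ_posCut_le hy0 (half_pos hε).le]
  exact (hφ.map_cfcₙ_posCut_le ha (cfcₙ_posCut_nonneg hy0 _) (by positivity) (by linarith)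
    (.of_norm_sub_le ha (cfcₙ_posCut_nonneg hy0 _) hnorm)).trans
    (map_cfcₙ_posCut_le_lscReg φ hy0 (half_pos hε))

theorem map_fEps_le_lscReg (hφ : IsPreQuasiTrace φ) (ha : 0 ≤ a) {ε : ℝ} (hε : 0 < ε) :
    φ (fEps ε a) ≤ Paper.lscReg φ (fEps (ε / 2) a) := by
  refine ENNReal.le_of_forall_lt_one_mul_le fun c hc => ?_
  rcases eq_or_ne c 0 with rfl | hc0
  · simp
  obtain ⟨θ, hθ, hθ1, rfl⟩ : ∃ θ : ℝ, 0 < θ ∧ θ < 1 ∧ ENNReal.ofReal θ = c :=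
    ⟨c.toReal, ENNReal.toReal_pos hc0 hc.ne_top, ENNReal.toReal_lt_of_lt_ofReal (by simpa using hc),
      ENNReal.ofReal_toReal hc.ne_top⟩
  have hcut0 := posCut_zero (sub_pos.2 hθ1).le
  have hcomp : cfcₙ (fun t => posCut (1 - θ) (cutoff (ε / 2) t)) a
      = cfcₙ (posCut (1 - θ)) (fEps (ε / 2) a) :=
    cfcₙ_comp' (posCut (1 - θ)) (cutoff (ε / 2)) a
  calc ENNReal.ofReal θ * φ (fEps ε a) = φ (cfcₙ (fun t => θ * cutoff ε t) a) := by
        rw [← hφ.map_smul θ _ hθ (fEps_nonneg ha ε), fEps, ← cfcₙ_const_mul θ (cutoff ε) a]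
    _ ≤ φ (cfcₙ (fun t => posCut (1 - θ) (cutoff (ε / 2) t)) a) :=
        hφ.mono_cfcₙ ha (by fun_prop) (by simp) (by fun_prop) (by simp [hcut0])
          (fun t _ => mul_nonneg hθ.le (cutoff_nonneg ε t))
          fun t _ => mul_cutoff_le_posCut_cutoff hθ.le hε t
    _ ≤ Paper.lscReg φ (fEps (ε / 2) a) :=
        hcomp ▸ map_cfcₙ_posCut_le_lscReg φ (fEps_nonneg ha _) (sub_pos.2 hθ1)

end IsPreQuasiTrace

end LscReg

/-! ### Two-by-two matrices -/

/-- The C*-algebra of two-by-two matrices over `R`, over which a 2-quasitrace extends. It is a `def`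
so that real scalars act on it only through the instance common to all C*-algebras. -/
def Mat2 (R : Type*) := CStarMatrix (Fin 2) (Fin 2) R

instance : NonUnitalCStarAlgebra (Mat2 R) :=
  inferInstanceAs (NonUnitalCStarAlgebra (CStarMatrix (Fin 2) (Fin 2) R))

instance : PartialOrder (Mat2 R) :=
  inferInstanceAs (PartialOrder (CStarMatrix (Fin 2) (Fin 2) R))

instance : StarOrderedRing (Mat2 R) :=
  inferInstanceAs (StarOrderedRing (CStarMatrix (Fin 2) (Fin 2) R))

/-- The element of `Mat2 R` with rows `(a, b)` and `(c, d)`. -/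
def mat2 (a b c d : R) : Mat2 R := CStarMatrix.ofMatrix !![a, b; c, d]

section Mat2

variable (a b c d a' b' c' d' : R)

theorem mat2_mul : mat2 a b c d * mat2 a' b' c' d' =
    mat2 (a * a' + b * c') (a * b' + b * d') (c * a' + d * c') (c * b' + d * d') :=
  congrArg CStarMatrix.ofMatrix (Matrix.mul_fin_two a b c d a' b' c' d')

theorem star_mat2 : star (mat2 a b c d) = mat2 (star a) (star c) (star b) (star d) := by
  refine CStarMatrix.ext fun i j => ?_
  fin_cases i <;> fin_cases j <;> rfl

theorem mat2_add : mat2 a b c d + mat2 a' b' c' d' = mat2 (a + a') (b + b') (c + c') (d + d') := by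
  refine CStarMatrix.ext fun i j => ?_
  fin_cases i <;> fin_cases j <;> rfl

theorem mat2_smul (r : ℂ) :
    r • mat2 a b c d = mat2 (r • a) (r • b) (r • c) (r • d) := by
  refine CStarMatrix.ext fun i j => ?_
  fin_cases i <;> fin_cases j <;> rfl

theorem mat2_zero : mat2 (0 : R) 0 0 0 = 0 := by
  refine CStarMatrix.ext fun i j => ?_
  fin_cases i <;> fin_cases j <;> rfl

omit [NonUnitalCStarAlgebra R] [PartialOrder R] [StarOrderedRing R] in
theorem exists_eq_mat2 (x : Mat2 R) : ∃ a b c d : R, x = mat2 a b c d := by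
  let entry := CStarMatrix.ofMatrix.symm x
  refine ⟨entry 0 0, entry 0 1, entry 1 0, entry 1 1, CStarMatrix.ext fun i j => ?_⟩
  fin_cases i <;> fin_cases j <;> rfl

end Mat2

/-- The embedding of `R × R` into `Mat2 R` as diagonal matrices. -/
def diag : R × R →⋆ₙₐ[ℂ] Mat2 R where
  toFun x := mat2 x.1 0 0 x.2
  map_smul' r x := by simp [mat2_smul]
  map_zero' := mat2_zero
  map_add' x y := by simp [mat2_add]
  map_mul' x y := by simp [mat2_mul]
  map_star' x := by simp [star_mat2]

section diag

variable {a b : R}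

theorem diag_apply (a b : R) : diag (a, b) = mat2 a 0 0 b := rfl

theorem cfcₙ_diag {f : ℝ → ℝ} (hf : Continuous f) (hf0 : f 0 = 0) (ha : IsSelfAdjoint a)
    (hb : IsSelfAdjoint b) : cfcₙ f (diag (a, b)) = diag (cfcₙ f a, cfcₙ f b) := by
  have hab : IsSelfAdjoint (a, b) := Prod.ext ha hb
  have hdiag : Continuous (diag : R × R →⋆ₙₐ[ℂ] Mat2 R) :=
    AddMonoidHomClass.continuous_of_bound diag 1 fun x => by
      rw [one_mul]; exact NonUnitalStarAlgHom.norm_apply_le diag x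
  rw [← cfcₙ_map_prod (S := ℂ) f a b hf.continuousOn hab ha hb]
  exact (NonUnitalStarAlgHom.map_cfcₙ (S := ℂ) (diag : R × R →⋆ₙₐ[ℂ] Mat2 R) f (a, b)
    hf.continuousOn hf0 hdiag hab (hab.map diag)).symm

theorem diag_nonneg (ha : 0 ≤ a) (hb : 0 ≤ b) : 0 ≤ diag (a, b) := by
  obtain ⟨k, hk, rfl⟩ := exists_isSelfAdjoint_mul_self_eq ha
  obtain ⟨l, hl, rfl⟩ := exists_isSelfAdjoint_mul_self_eq hb
  have hkl : IsSelfAdjoint (k, l) := Prod.ext hk hl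
  rw [← Prod.mk_mul_mk, map_mul]
  exact (hkl.map diag).mul_self_nonneg

theorem nonneg_of_diag_zero_nonneg (ha : 0 ≤ diag (a, 0)) : 0 ≤ a := by
  obtain ⟨y, hy⟩ := CStarAlgebra.nonneg_iff_eq_star_mul_self.1 ha
  obtain ⟨p, q, r, s, rfl⟩ := exists_eq_mat2 y
  rw [star_mat2, mat2_mul, diag_apply] at hy
  have ha_eq : a = star p * p + star r * r := 
    congrArg (fun m : Mat2 R => CStarMatrix.ofMatrix.symm m 0 0) hy
  rw [ha_eq]
  exact add_nonneg (star_mul_self_nonneg _) (star_mul_self_nonneg _)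

/-- With `a = k²` and `b = l²`, the witness is the row `(k, l)`. -/
theorem exists_mul_star_self_eq_diag_add (ha : 0 ≤ a) (hb : 0 ≤ b) :
    ∃ m : Mat2 R, m * star m = diag (a + b, 0) ∧ star m * m ≤ (2 : ℝ) • diag (a, b) := by
  obtain ⟨k, hk, rfl⟩ := exists_isSelfAdjoint_mul_self_eq ha
  obtain ⟨l, hl, rfl⟩ := exists_isSelfAdjoint_mul_self_eq hb
  refine ⟨mat2 k l 0 0, by simp [diag_apply, star_mat2, mat2_mul, hk.star_eq, hl.star_eq], ?_⟩
  have hsum : (2 : ℝ) • diag (k * k, l * l) =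
      star (mat2 k (-l) 0 0) * mat2 k (-l) 0 0 + star (mat2 k l 0 0) * mat2 k l 0 0 := by
    simp [diag_apply, star_mat2, mat2_mul, mat2_add, hk.star_eq, hl.star_eq, two_smul]
  rw [hsum]
  exact le_add_of_nonneg_left (star_mul_self_nonneg _)

end diag

/-- `φ` and `σ` are pre-quasitraces on `R` and on the matrices over `R`, and `σ` extends `φ` along
the upper left corner. -/
structure IsMatrixExtension (φ : R → ℝ≥0∞) (σ : Mat2 R → ℝ≥0∞) : Prop where
  left : IsPreQuasiTrace φ
  right : IsPreQuasiTrace σ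
  map_corner : ∀ a, σ (diag (a, 0)) = φ a

namespace IsMatrixExtension

variable {φ : R → ℝ≥0∞} {σ : Mat2 R → ℝ≥0∞} {a b : R}

theorem lscReg (h : IsMatrixExtension φ σ) : IsMatrixExtension (lscReg φ) (lscReg σ) where
  left := h.left.lscReg
  right := h.right.lscReg
  map_corner a := by
    by_cases ha : 0 ≤ a
    · rw [lscReg_of_nonneg φ ha, lscReg_of_nonneg σ (diag_nonneg ha le_rfl)]
      refine iSup_congr fun ε => ?_
      rw [cfcₙ_diag (continuous_posCut _) (posCut_zero ε.2.le) ha.isSelfAdjoint (.zero R),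
        cfcₙ_apply_zero, h.map_corner]
    · rw [lscReg_of_not_nonneg φ ha,
        lscReg_of_not_nonneg σ fun h => ha (nonneg_of_diag_zero_nonneg h)]

theorem map_diag (h : IsMatrixExtension φ σ) (ha : 0 ≤ a) (hb : 0 ≤ b) :
    σ (diag (a, b)) = φ a + φ b := by
  have hswap : σ (diag (0, b)) = φ b := by
    obtain ⟨l, hl, rfl⟩ := exists_isSelfAdjoint_mul_self_eq hb
    have htr := h.right.map_star_mul_self (mat2 0 l 0 0)
    simp only [star_mat2, mat2_mul, hl.star_eq, star_zero, mul_zero, zero_mul, add_zero,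
      zero_add] at htr
    rw [diag_apply, htr, ← diag_apply, h.map_corner]
  have hsplit : diag (a, b) = diag (a, 0) + diag (0, b) := by simp [← map_add]
  rw [hsplit, h.right.map_add _ _ (diag_nonneg ha le_rfl) (diag_nonneg le_rfl hb)
    (by simp [← map_mul]), h.map_corner, hswap]

theorem map_add_le (h : IsMatrixExtension φ σ) (hl : LowerSemicontinuousOn φ {a : R | 0 ≤ a})
    (ha : 0 ≤ a) (hb : 0 ≤ b) : φ (a + b) ≤ 2 * (φ a + φ b) := by
  have hab := add_nonneg ha hb
  obtain ⟨m, hm, hle⟩ := exists_mul_star_self_eq_diag_add ha hb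
  refine (le_lscReg_of_lowerSemicontinuousOn hl hab).trans (lscReg_le hab fun ε hε => ?_)
  calc φ (cfcₙ (posCut ε) (a + b)) = σ (cfcₙ (posCut ε) (m * star m)) := by
        rw [← h.map_corner, hm, cfcₙ_diag (continuous_posCut ε) (posCut_zero hε.le)
          hab.isSelfAdjoint (.zero R), cfcₙ_apply_zero]
    _ = σ (cfcₙ (posCut ε) (star m * m)) :=
        (h.right.map_cfcₙ_star_mul_self_of_eq_zero (continuous_posCut ε) (posCut_nonneg ε) hε
          (fun _ ht => posCut_eq_zero ht) m).symm
    _ ≤ σ ((2 : ℝ) • diag (a, b)) :=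
        h.right.map_cfcₙ_posCut_le (star_mul_self_nonneg m)
          (smul_nonneg zero_le_two (diag_nonneg ha hb)) le_rfl hε (.of_le hle le_rfl)
    _ = 2 * (φ a + φ b) := by
        rw [h.right.map_smul _ _ two_pos (diag_nonneg ha hb), h.map_diag ha hb,
          ENNReal.ofReal_ofNat]

theorem dimFun_diag_le (h : IsMatrixExtension φ σ) (ha : 0 ≤ a) (hb : 0 ≤ b) :
    dimFun σ (diag (a, b)) ≤ dimFun φ a + dimFun φ b := by
  refine iSup_le fun n => ?_
  rw [fEps, cfcₙ_diag (continuous_cutoff _) (cutoff_zero _) ha.isSelfAdjoint hb.isSelfAdjoint,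
    ← fEps, ← fEps, h.map_diag (fEps_nonneg ha _) (fEps_nonneg hb _)]
  exact add_le_add (h.left.map_fEps_le_dimFun ha (by positivity))
    (h.left.map_fEps_le_dimFun hb (by positivity))

theorem dimFun_corner (h : IsMatrixExtension φ σ) (ha : IsSelfAdjoint a) :
    dimFun σ (diag (a, 0)) = dimFun φ a := by
  refine iSup_congr fun n => ?_
  rw [fEps, cfcₙ_diag (continuous_cutoff _) (cutoff_zero _) ha (.zero R), cfcₙ_apply_zero,
    h.map_corner, fEps]

theorem dimFun_add_le (h : IsMatrixExtension φ σ) (ha : 0 ≤ a) (hb : 0 ≤ b) :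
    dimFun φ (a + b) ≤ dimFun φ a + dimFun φ b := by
  obtain ⟨m, hm, hle⟩ := exists_mul_star_self_eq_diag_add ha hb
  calc dimFun φ (a + b) = dimFun σ (m * star m) := by
        rw [hm, h.dimFun_corner (add_nonneg ha hb).isSelfAdjoint]
    _ = dimFun σ (star m * m) := (h.right.dimFun_star_mul_self m).symm
    _ ≤ dimFun σ (diag (a, b)) :=
        h.right.dimFun_le_of_le_smul (star_mul_self_nonneg m) (diag_nonneg ha hb) zero_le_two hle
    _ ≤ dimFun φ a + dimFun φ b := h.dimFun_diag_le ha hb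

end IsMatrixExtension

/-! ### Quasitraces and their limits -/

omit [StarOrderedRing R] in
theorem QuasiTrace.isPreQuasiTrace (τ : QuasiTrace R) : IsPreQuasiTrace τ.toFun where
  map_zero := τ.map_zero
  map_smul := τ.map_smul
  map_add := τ.map_add_of_commute
  map_star_mul_self := τ.map_star_mul_self

theorem ofMatrix_symm_diag_zero (a : R) :
    CStarMatrix.ofMatrix.symm (diag (a, 0) : Mat2 R) =
      fun i j => if i = 0 ∧ j = 0 then a else 0 := by
  funext i j
  fin_cases i <;> fin_cases j <;> rfl

theorem QuasiTrace.exists_isMatrixExtension (τ : QuasiTrace R) :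
    ∃ σ : Mat2 R → ℝ≥0∞, IsMatrixExtension τ.toFun σ := by
  obtain ⟨σ, hcorner, hzero, hsmul, hadd, hstar⟩ := τ.exists_matrix_extension
  have hsquare : ∀ x : Mat2 R, 0 ≤ x →
      ∃ y, CStarMatrix.ofMatrix.symm x = star y * y := fun x hx => by
    obtain ⟨y, hy⟩ := CStarAlgebra.nonneg_iff_eq_star_mul_self.1 hx
    exact ⟨CStarMatrix.ofMatrix.symm y, congrArg CStarMatrix.ofMatrix.symm hy⟩
  refine ⟨fun x => σ (CStarMatrix.ofMatrix.symm x), τ.isPreQuasiTrace, ?_, fun a => ?_⟩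
  · exact
      { map_zero := hzero
        map_smul := fun r x hr hx => hsmul r _ hr (hsquare x hx)
        map_add := fun x y hx hy hxy =>
          hadd _ _ (hsquare x hx) (hsquare y hy) (congrArg CStarMatrix.ofMatrix.symm hxy)
        map_star_mul_self := fun x => hstar _ }
  · rw [ofMatrix_symm_diag_zero, hcorner]

/-- The quasitrace carried by a lower semicontinuous pre-quasitrace which extends to matrices. -/
def IsMatrixExtension.toQuasiTrace {φ : R → ℝ≥0∞} {σ : Mat2 R → ℝ≥0∞}
    (h : IsMatrixExtension φ σ) (hl : LowerSemicontinuousOn φ {a : R | 0 ≤ a})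
    (h0 : ∀ a : R, ¬ (0 ≤ a) → φ a = 0) (hfin : ∀ a ∈ pedersen R, 0 ≤ a → φ a < ∞) :
    QuasiTrace R where
  toFun := φ
  zero_of_not_nonneg := h0
  map_zero := h.left.map_zero
  map_smul := h.left.map_smul
  map_add_of_commute := h.left.map_add
  map_star_mul_self := h.left.map_star_mul_self
  lowerSemicontinuousOn := hl
  finite_on_pedersen := hfin
  exists_matrix_extension := by
    have hsquare (y : Matrix (Fin 2) (Fin 2) R) :
        (0 : Mat2 R) ≤ CStarMatrix.ofMatrix (star y * y) :=
      star_mul_self_nonneg (CStarMatrix.ofMatrix y : Mat2 R)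
    refine ⟨fun x => σ (CStarMatrix.ofMatrix x : Mat2 R), fun a => ?_, h.right.map_zero, ?_, ?_,
      fun x => h.right.map_star_mul_self (CStarMatrix.ofMatrix x : Mat2 R)⟩
    · rw [← ofMatrix_symm_diag_zero]
      exact h.map_corner a
    · rintro r _ hr ⟨y, rfl⟩
      exact h.right.map_smul r _ hr (hsquare y)
    · rintro _ _ ⟨y, rfl⟩ ⟨z, rfl⟩ hyz
      exact h.right.map_add _ _ (hsquare y) (hsquare z) (congrArg CStarMatrix.ofMatrix hyz)

omit [StarOrderedRing R] in
theorem IsPreQuasiTrace.const_mul {φ : R → ℝ≥0∞} (h : IsPreQuasiTrace φ) (c : ℝ≥0∞) :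
    IsPreQuasiTrace fun a => c * φ a where
  map_zero := by rw [h.map_zero, mul_zero]
  map_smul r a hr ha := by rw [h.map_smul r a hr ha, mul_left_comm]
  map_add a b ha hb hab := by rw [h.map_add a b ha hb hab, mul_add]
  map_star_mul_self x := by rw [h.map_star_mul_self]

theorem IsMatrixExtension.const_mul {φ : R → ℝ≥0∞} {σ : Mat2 R → ℝ≥0∞}
    (h : IsMatrixExtension φ σ) (c : ℝ≥0∞) :
    IsMatrixExtension (fun a => c * φ a) (fun a => c * σ a) :=
  ⟨h.left.const_mul c, h.right.const_mul c, fun a => by rw [h.map_corner]⟩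

omit [PartialOrder R] [StarOrderedRing R] in
theorem dimFun_const_mul (φ : R → ℝ≥0∞) (c : ℝ≥0∞) (a : R) :
    dimFun (fun x => c * φ x) a = c * dimFun φ a :=
  (ENNReal.mul_iSup ..).symm

namespace QuasiTrace

variable (τ : QuasiTrace R) {a b : R}

theorem exists_toFun_eq_const_mul {c : ℝ≥0∞} (hc : c ≠ ∞) :
    ∃ τ' : QuasiTrace R, τ'.toFun = fun a => c * τ.toFun a := by
  obtain ⟨σ, hσ⟩ := τ.exists_isMatrixExtension
  refine ⟨(hσ.const_mul c).toQuasiTrace ?_ (fun a ha => ?_) fun a ha ha0 => ?_, rfl⟩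
  · exact (ENNReal.continuous_const_mul hc).comp_lowerSemicontinuousOn τ.lowerSemicontinuousOn
      fun _ _ hxy => mul_le_mul_right hxy c
  · rw [τ.zero_of_not_nonneg a ha, mul_zero]
  · exact ENNReal.mul_lt_top hc.lt_top (τ.finite_on_pedersen a ha ha0)

theorem map_add_le (ha : 0 ≤ a) (hb : 0 ≤ b) :
    τ.toFun (a + b) ≤ 2 * (τ.toFun a + τ.toFun b) := by
  obtain ⟨σ, hσ⟩ := τ.exists_isMatrixExtension
  exact hσ.map_add_le τ.lowerSemicontinuousOn ha hb

theorem mono (ha : 0 ≤ a) (hab : a ≤ b) : τ.toFun a ≤ τ.toFun b :=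
  τ.isPreQuasiTrace.mono_of_lowerSemicontinuousOn τ.lowerSemicontinuousOn ha hab

theorem dimFun_add_le (ha : 0 ≤ a) (hb : 0 ≤ b) :
    dimFun τ.toFun (a + b) ≤ dimFun τ.toFun a + dimFun τ.toFun b := by
  obtain ⟨σ, hσ⟩ := τ.exists_isMatrixExtension
  exact hσ.dimFun_add_le ha hb

end QuasiTrace

section limits

variable {ι : Type*} {l : Filter ι} {φ : ι → R → ℝ≥0∞} {ψ : R → ℝ≥0∞}

omit [StarOrderedRing R] in
theorem IsPreQuasiTrace.of_tendsto [l.NeBot] (hφ : ∀ i, IsPreQuasiTrace (φ i))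
    (hψ : ∀ a, Tendsto (φ · a) l (𝓝 (ψ a))) : IsPreQuasiTrace ψ where
  map_zero := tendsto_nhds_unique (hψ 0) (by simp [(hφ _).map_zero])
  map_smul r a hr ha := by
    refine tendsto_nhds_unique (hψ _) ?_
    simp only [fun i => (hφ i).map_smul r a hr ha]
    exact ENNReal.Tendsto.const_mul (hψ a) (Or.inr ENNReal.ofReal_ne_top)
  map_add a b ha hb hab := by
    refine tendsto_nhds_unique (hψ _) ?_
    simp only [fun i => (hφ i).map_add a b ha hb hab]
    exact (hψ a).add (hψ b)
  map_star_mul_self x := by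
    refine tendsto_nhds_unique (hψ _) ?_
    simp only [fun i => (hφ i).map_star_mul_self x]
    exact hψ _

theorem tendsto_lim_ultrafilter {X : Type*} (φ : ι → X → ℝ≥0∞) (U : Ultrafilter ι) (a : X) :
    Tendsto (φ · a) U (𝓝 (U.map (φ · a)).lim) :=
  (U.map (φ · a)).le_nhds_lim

theorem IsMatrixExtension.lim_ultrafilter {σ : ι → Mat2 R → ℝ≥0∞}
    (h : ∀ i, IsMatrixExtension (φ i) (σ i)) (U : Ultrafilter ι) :
    IsMatrixExtension (fun a => (U.map (φ · a)).lim) (fun x => (U.map (σ · x)).lim) where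
  left := .of_tendsto (fun i => (h i).left) (tendsto_lim_ultrafilter φ U)
  right := .of_tendsto (fun i => (h i).right) (tendsto_lim_ultrafilter σ U)
  map_corner a := by simp only [fun i => (h i).map_corner a]

end limits

/-! ### Ideals and the Pedersen ideal -/

omit [PartialOrder R] [StarOrderedRing R] in
/-- An element of a dense ideal close to `q` acts on `p` as a quasi-regular perturbation of the
identity, and quasi-inversion stays inside the ideal. -/
theorem mem_pedersen_of_mul_eq {p q : R} (h : q * p = p) : p ∈ pedersen R := by
  refine Set.mem_iInter₂.2 fun I ⟨⟨_, _, hadd, _, hmul⟩, hdense⟩ => ?_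
  obtain ⟨x, hxI, hqx⟩ := Metric.mem_closure_iff.1 (hdense (Set.mem_univ q)) 1 one_pos
  have hunit : IsUnit (1 + ((-(q - x) : R) : Unitization ℂ R)) := by
    rw [Unitization.inr_neg, ← sub_eq_add_neg]
    exact isUnit_one_sub_of_norm_lt_one (by rwa [Unitization.norm_inr, ← dist_eq_norm])
  obtain ⟨y, -, hy⟩ := isQuasiregular_iff.1 ((isQuasiregular_iff_isUnit' ℂ).2 hunit)
  have hxp : x * p ∈ I := (hmul x hxI p (Set.mem_univ p)).1
  have hp : p = x * p + y * (x * p) := by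
    have hyp : -(p - x * p) + y * p + -(y * p - y * (x * p)) = 0 := by
      simpa [add_mul, sub_mul, mul_sub, mul_assoc, h] using congrArg (· * p) hy
    rw [← sub_eq_zero, ← neg_eq_zero, ← hyp]
    abel
  rw [hp]
  exact hadd _ hxp _ (hmul _ hxp y (Set.mem_univ y)).2

/-- The algebraic ideal generated by the products `y * F * z`. -/
def sandwichIdeal (F : R) : Submodule ℂ R :=
  Submodule.span ℂ {x : R | ∃ y z : R, x = y * F * z}

section sandwichIdeal

variable {F x : R}

omit [PartialOrder R] [StarOrderedRing R]

theorem mul_mul_mem_sandwichIdeal (F y z : R) : y * F * z ∈ sandwichIdeal F :=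
  Submodule.subset_span ⟨y, z, rfl⟩

theorem mul_mem_sandwichIdeal_right (hx : x ∈ sandwichIdeal F) (b : R) :
    x * b ∈ sandwichIdeal F := by
  refine (Submodule.span_le (p := (sandwichIdeal F).comap (LinearMap.mulRight ℂ b))).2 ?_ hx
  rintro _ ⟨y, z, rfl⟩
  simpa [mul_assoc] using mul_mul_mem_sandwichIdeal F y (z * b)

theorem mul_mem_sandwichIdeal_left (hx : x ∈ sandwichIdeal F) (b : R) :
    b * x ∈ sandwichIdeal F := by
  refine (Submodule.span_le (p := (sandwichIdeal F).comap (LinearMap.mulLeft ℂ b))).2 ?_ hx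
  rintro _ ⟨y, z, rfl⟩
  simpa [mul_assoc] using mul_mul_mem_sandwichIdeal F (b * y) z

theorem isIdealIn_sandwichIdeal (F : R) : IsIdealIn R Set.univ (sandwichIdeal F : Set R) :=
  ⟨Set.subset_univ _, zero_mem _, fun _ hx _ hy => add_mem hx hy, fun _ hx => neg_mem hx,
    fun _ hx b _ => ⟨mul_mem_sandwichIdeal_right hx b, mul_mem_sandwichIdeal_left hx b⟩⟩

theorem mem_sandwichIdeal_of_mem_pedersen (hF : Dense (sandwichIdeal F : Set R))
    (hx : x ∈ pedersen R) : x ∈ sandwichIdeal F :=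
  Set.mem_iInter₂.1 hx _ ⟨isIdealIn_sandwichIdeal F, hF.closure_eq.ge⟩

theorem mul_self_mul_self_ne_zero {f : R} (hf : IsSelfAdjoint f) (hf0 : f ≠ 0) :
    f * f * f ≠ 0 := by
  have hff : f * f ≠ 0 := by simpa [hf.star_eq] using (CStarRing.star_mul_self_ne_zero_iff f).2 hf0
  refine fun h => (CStarRing.star_mul_self_ne_zero_iff _).2 hff ?_
  rw [star_mul, hf.star_eq, ← mul_assoc, h, zero_mul]

theorem dense_sandwichIdeal (hR : IsSimpleCStar R) {f : R} (hf : IsSelfAdjoint f) (hf0 : f ≠ 0) :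
    Dense (sandwichIdeal f : Set R) := by
  let J := (sandwichIdeal f).topologicalClosure
  let I : TwoSidedIdeal R := TwoSidedIdeal.mk' J J.zero_mem J.add_mem J.neg_mem
    (fun {x y} hy => map_mem_closure (f := (x * ·)) (by fun_prop) hy
      fun _ ht => mul_mem_sandwichIdeal_left ht x)
    (fun {x y} hx => map_mem_closure (f := (· * y)) (by fun_prop) hx
      fun _ ht => mul_mem_sandwichIdeal_right ht y)
  have hI : (I : Set R) = J := Set.ext fun x => TwoSidedIdeal.mem_mk' _ _ _ _ _ _ _
  have hJ : (J : Set R) ≠ {0} := fun h => mul_self_mul_self_ne_zero hf hf0 <|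
    (Set.ext_iff.1 h _).1 (subset_closure (mul_mul_mem_sandwichIdeal f f f))
  have hIJ := hR.2 I (by rw [hI]; exact (sandwichIdeal f).isClosed_topologicalClosure)
  rw [hI] at hIJ
  exact dense_iff_closure_eq.2 (hIJ.resolve_left hJ)

end sandwichIdeal

namespace Stabilization

variable (SB : Stabilization A W)

omit [PartialOrder A] [StarOrderedRing A] [PartialOrder W] [StarOrderedRing W]

theorem continuous_emb (i j : ℕ) : Continuous (SB.emb i j) :=
  AddMonoidHomClass.continuous_of_bound (SB.emb i j) 1 fun x => by rw [one_mul, SB.norm_emb]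

/-- The embedding `a ↦ a ⊗ e₁₁` as a homomorphism. -/
def corner : A →⋆ₙₐ[ℂ] W where
  toFun := SB.emb 0 0
  map_smul' r a := map_smul _ r a
  map_zero' := map_zero _
  map_add' a b := map_add _ a b
  map_mul' a b := by rw [SB.emb_mul, if_pos rfl]
  map_star' a := (SB.emb_star 0 0 a).symm

theorem emb_mem_sandwichIdeal {f x : A} (hx : x ∈ sandwichIdeal f) (i j : ℕ) :
    SB.emb i j x ∈ sandwichIdeal (SB.corner f) := by
  refine (Submodule.span_le (p := (sandwichIdeal (SB.corner f)).comap (SB.emb i j))).2 ?_ hx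
  rintro _ ⟨y, z, rfl⟩
  refine Submodule.subset_span ⟨SB.emb i 0 y, SB.emb 0 j z, ?_⟩
  change SB.emb i j (y * f * z) = SB.emb i 0 y * SB.emb 0 0 f * SB.emb 0 j z
  rw [SB.emb_mul, if_pos rfl, SB.emb_mul, if_pos rfl]

theorem dense_sandwichIdeal_corner (hA : IsSimpleCStar A) {f : A} (hf : IsSelfAdjoint f)
    (hf0 : f ≠ 0) : Dense (sandwichIdeal (SB.corner f) : Set W) := by
  have hspan : Submodule.span ℂ {w : W | ∃ (i j : ℕ) (a : A), w = SB.emb i j a} ≤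
      (sandwichIdeal (SB.corner f)).topologicalClosure := by
    refine Submodule.span_le.2 ?_
    rintro _ ⟨i, j, a, rfl⟩
    exact map_mem_closure (SB.continuous_emb i j) (dense_sandwichIdeal hA hf hf0 a)
      fun x hx => SB.emb_mem_sandwichIdeal hx i j
  exact dense_closure.1 (SB.dense_span.mono hspan)

end Stabilization

/-- The value of every quasitrace at `x` is at most a common finite multiple of its value
at `F`. -/
def IsTraceDominated (x F : R) : Prop :=
  ∃ C : ℝ≥0∞, C ≠ ∞ ∧ ∀ τ : QuasiTrace R, τ.toFun x ≤ C * τ.toFun F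

section IsTraceDominated

variable {F x y : R}

theorem IsTraceDominated.of_le (h : IsTraceDominated y F) (hx : 0 ≤ x) (hxy : x ≤ y) :
    IsTraceDominated x F :=
  let ⟨C, hC, hCF⟩ := h
  ⟨C, hC, fun τ => (τ.mono hx hxy).trans (hCF τ)⟩

theorem IsTraceDominated.add (hxF : IsTraceDominated x F) (hyF : IsTraceDominated y F)
    (hx : 0 ≤ x) (hy : 0 ≤ y) : IsTraceDominated (x + y) F := by
  obtain ⟨C, hC, hCF⟩ := hxF
  obtain ⟨D, hD, hDF⟩ := hyF
  refine ⟨2 * (C + D), ENNReal.mul_ne_top (by simp) (by simp [hC, hD]), fun τ => ?_⟩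
  calc τ.toFun (x + y) ≤ 2 * (τ.toFun x + τ.toFun y) := τ.map_add_le hx hy
    _ ≤ 2 * (C * τ.toFun F + D * τ.toFun F) := by gcongr; exacts [hCF τ, hDF τ]
    _ = 2 * (C + D) * τ.toFun F := by ring

theorem isTraceDominated_conjugate (hF : 0 ≤ F) (y : R) :
    IsTraceDominated (star y * F * y) F := by
  obtain ⟨k, hk, rfl⟩ := exists_isSelfAdjoint_mul_self_eq hF
  refine ⟨ENNReal.ofReal (‖y * star y‖ + 1), ENNReal.ofReal_ne_top, fun τ => ?_⟩
  have hyy := mul_star_self_nonneg y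
  calc τ.toFun (star y * (k * k) * y) = τ.toFun (k * (y * star y) * k) := by
        simpa [hk.star_eq, mul_assoc] using τ.map_star_mul_self (k * y)
    _ ≤ τ.toFun ((‖y * star y‖ + 1) • (k * k)) :=
        τ.mono (hk.conjugate_nonneg hyy) ((conjugate_le_norm_smul hk hyy.isSelfAdjoint).trans
          (by gcongr; linarith))
    _ = ENNReal.ofReal (‖y * star y‖ + 1) * τ.toFun (k * k) :=
        τ.map_smul _ _ (by positivity) hF

/-- Polarisation: `y F z + (y F z)* ≤ y F y* + z* F z`. -/
theorem exists_add_star_le_of_mem_sandwichIdeal (hF : 0 ≤ F) (hx : x ∈ sandwichIdeal F) :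
    ∃ w : R, 0 ≤ w ∧ x + star x ≤ w ∧ IsTraceDominated w F := by
  have hprod (y z : R) : ∃ w : R, 0 ≤ w ∧ y * F * z + star (y * F * z) ≤ w ∧
      IsTraceDominated w F := by
    have hy := star_right_conjugate_nonneg hF y
    have hz := star_left_conjugate_nonneg hF z
    refine ⟨y * F * star y + star z * F * z, add_nonneg hy hz, ?_, .add ?_
      (isTraceDominated_conjugate hF z) hy hz⟩
    · rw [← sub_nonneg]
      convert star_left_conjugate_nonneg hF (star y - z) using 1
      simp only [star_mul, star_sub, star_star, hF.isSelfAdjoint.star_eq]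
      noncomm_ring
    · simpa using isTraceDominated_conjugate hF (star y)
  induction hx using Submodule.closure_induction with
  | zero => exact ⟨0, le_rfl, by simp, 0, by simp, fun τ => by simp [τ.map_zero]⟩
  | add x y _ _ hx hy =>
    obtain ⟨w, hw, hxw, hwF⟩ := hx
    obtain ⟨v, hv, hyv, hvF⟩ := hy
    refine ⟨w + v, add_nonneg hw hv, ?_, hwF.add hvF hw hv⟩
    rw [star_add, add_add_add_comm]
    exact add_le_add hxw hyv
  | smul_mem c x hx =>
    obtain ⟨y, z, rfl⟩ := hx
    simpa only [smul_mul_assoc] using hprod (c • y) z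

theorem isTraceDominated_of_mem_sandwichIdeal (hF : 0 ≤ F) (hx : x ∈ sandwichIdeal F)
    (hx0 : 0 ≤ x) : IsTraceDominated x F := by
  obtain ⟨w, -, hxw, hwF⟩ := exists_add_star_le_of_mem_sandwichIdeal hF hx
  refine hwF.of_le hx0 (le_trans ?_ hxw)
  rw [hx0.isSelfAdjoint.star_eq]
  exact le_add_of_nonneg_left hx0

theorem QuasiTrace.isZero_of_dense_sandwichIdeal (τ : QuasiTrace R) (hF : 0 ≤ F)
    (hdense : Dense (sandwichIdeal F : Set R)) (h0 : τ.toFun F = 0) : τ.IsZero := by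
  intro s
  by_cases hs : 0 ≤ s
  swap
  · exact τ.zero_of_not_nonneg s hs
  obtain ⟨k, hk, rfl⟩ := exists_isSelfAdjoint_mul_self_eq hs
  have hsq : Tendsto (fun x : R => star x * x) (𝓝 k) (𝓝 (k * k)) := by
    have hcont : Continuous fun x : R => star x * x := by fun_prop
    simpa only [hk.star_eq] using hcont.tendsto k
  by_contra hne
  have hpos := τ.lowerSemicontinuousOn (k * k) hs 0 (pos_iff_ne_zero.2 hne)
  obtain ⟨x, hxF, hx⟩ := ((mem_closure_iff_frequently.1 (hdense k)).and_eventually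
    (hsq.eventually (eventually_nhdsWithin_iff.1 hpos))).exists
  obtain ⟨C, -, hC⟩ := isTraceDominated_of_mem_sandwichIdeal hF
    (mul_mem_sandwichIdeal_left hxF (star x)) (star_mul_self_nonneg x)
  have hCx := hC τ
  rw [h0, mul_zero] at hCx
  exact (hx (star_mul_self_nonneg x)).not_ge hCx

end IsTraceDominated

/-! ### Normalised quasitraces -/

/-- The norm of the restriction of `τ` to `her c`, so that `QTSetHer c` consists of the
quasitraces for which it is `1`. -/
def QuasiTrace.hereditaryNorm (τ : QuasiTrace R) (c : R) : ℝ≥0∞ :=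
  ⨆ a : {a : R // a ∈ her c ∧ 0 ≤ a ∧ ‖a‖ ≤ 1}, τ.toFun a

/-- A set of quasitraces which, like the base of a cone, meets every ray, is bounded on the
Pedersen ideal and stays away from zero. -/
structure IsQuasiTraceBase (S : Set (QuasiTrace R)) : Prop where
  exists_const_mul_mem : ∀ τ : QuasiTrace R, ¬ τ.IsZero → ∃ c : ℝ≥0∞, c ≠ 0 ∧ c ≠ ∞ ∧
    ∃ τ' ∈ S, τ'.toFun = fun x => c * τ.toFun x
  bounded_on_pedersen : ∀ x ∈ pedersen R, 0 ≤ x → ∃ C : ℝ≥0∞, C ≠ ∞ ∧ ∀ τ ∈ S, τ.toFun x ≤ C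
  exists_one_le_map_fEps : ∃ h : R, 0 ≤ h ∧ ∃ δ : ℝ, 0 < δ ∧ ∀ τ ∈ S, 1 ≤ τ.toFun (fEps δ h)

omit [PartialOrder R] [StarOrderedRing R] in
theorem mul_eq_self_of_mem_her {c p x : R} (hpc : p * c = c) (hx : x ∈ her c) : p * x = x := by
  refine closure_minimal (t := {x : R | p * x = x}) ?_
    (isClosed_eq (by fun_prop) (by fun_prop)) hx
  rintro _ ⟨y, rfl⟩
  change p * (c * y * c) = c * y * c
  rw [← mul_assoc, ← mul_assoc, hpc]

namespace QuasiTrace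

variable (τ : QuasiTrace R) {c p : R}

theorem map_mul_self_mul_self_le_hereditaryNorm (hc : 0 ≤ c) (hc1 : ‖c‖ ≤ 1) :
    τ.toFun (c * c * c) ≤ τ.hereditaryNorm c := by
  have hnorm : ‖c * c * c‖ ≤ 1 :=
    calc ‖c * c * c‖ ≤ ‖c‖ * ‖c‖ * ‖c‖ := norm_mul₃_le
      _ ≤ 1 * 1 * 1 := by gcongr
      _ = 1 := by norm_num
  exact le_iSup (fun a : {a : R // a ∈ her c ∧ 0 ≤ a ∧ ‖a‖ ≤ 1} => τ.toFun a)
    ⟨c * c * c, subset_closure ⟨c, rfl⟩, hc.isSelfAdjoint.conjugate_nonneg hc, hnorm⟩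

theorem hereditaryNorm_le (hp : IsSelfAdjoint p) (hpc : p * c = c) :
    τ.hereditaryNorm c ≤ τ.toFun (p * p) :=
  iSup_le fun a => τ.isPreQuasiTrace.map_le_map_mul_self a.2.2.1 a.2.2.2 hp
    (mul_eq_self_of_mem_her hpc a.2.1)

theorem exists_mem_QTSetHer {c : R} (h0 : τ.hereditaryNorm c ≠ 0) (h1 : τ.hereditaryNorm c ≠ ∞) :
    ∃ τ' ∈ QTSetHer c, τ'.toFun = fun x => (τ.hereditaryNorm c)⁻¹ * τ.toFun x := by
  obtain ⟨τ', hτ'⟩ := τ.exists_toFun_eq_const_mul (ENNReal.inv_ne_top.2 h0)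
  refine ⟨τ', ?_, hτ'⟩
  calc τ'.hereditaryNorm c = (τ.hereditaryNorm c)⁻¹ * τ.hereditaryNorm c := by
        simp only [hereditaryNorm, hτ', ENNReal.mul_iSup]
    _ = 1 := ENNReal.inv_mul_cancel h0 h1

end QuasiTrace

theorem isQuasiTraceBase_QTSetHer_fEps {a : R} {δ : ℝ} (ha : 0 ≤ a) (hδ : 0 < δ)
    (hdense : Dense (sandwichIdeal (fEps δ a * fEps δ a * fEps δ a) : Set R)) :
    IsQuasiTraceBase (QTSetHer (fEps δ a)) := by
  set e := fEps δ a
  set p := fEps (δ / 2) a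
  have he := fEps_nonneg ha δ
  have heee : 0 ≤ e * e * e := he.isSelfAdjoint.conjugate_nonneg he
  have hp : IsSelfAdjoint p := isSelfAdjoint_fEps _ _
  have hpe : p * e = e := fEps_mul_fEps (half_pos hδ) le_rfl
  have hpp : p * p ∈ pedersen R := mem_pedersen_of_mul_eq (q := fEps (δ / 2 / 2) a) <| by
    rw [← mul_assoc, fEps_mul_fEps (by positivity) le_rfl]
  have hlower (τ : QuasiTrace R) : τ.toFun (e * e * e) ≤ τ.hereditaryNorm e :=
    τ.map_mul_self_mul_self_le_hereditaryNorm he (norm_fEps_le_one ha δ)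
  have hupper (τ : QuasiTrace R) : τ.hereditaryNorm e ≤ τ.toFun (p * p) :=
    τ.hereditaryNorm_le hp hpe
  refine ⟨fun τ hτ => ?_, fun x hx hx0 => ?_, a, ha, δ / 2, half_pos hδ, fun τ hτ => ?_⟩
  · have h0 : τ.hereditaryNorm e ≠ 0 := fun h => hτ <|
      τ.isZero_of_dense_sandwichIdeal heee hdense (le_zero_iff.1 ((hlower τ).trans h.le))
    have h1 : τ.hereditaryNorm e ≠ ∞ :=
      ((hupper τ).trans_lt (τ.finite_on_pedersen _ hpp hp.mul_self_nonneg)).ne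
    exact ⟨_, ENNReal.inv_ne_zero.2 h1, ENNReal.inv_ne_top.2 h0, τ.exists_mem_QTSetHer h0 h1⟩
  · obtain ⟨C, hC, hCx⟩ := isTraceDominated_of_mem_sandwichIdeal heee
      (mem_sandwichIdeal_of_mem_pedersen hdense hx) hx0
    refine ⟨C, hC, fun τ (hτ : τ.hereditaryNorm e = 1) => (hCx τ).trans ?_⟩
    exact mul_le_of_le_one_right' ((hlower τ).trans hτ.le)
  · calc 1 = τ.hereditaryNorm e := Eq.symm hτ
      _ ≤ τ.toFun (p * p) := hupper τ
      _ ≤ τ.toFun p := τ.isPreQuasiTrace.map_fEps_mul_self_le ha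

theorem exists_fEps_ne_zero {a : R} (ha : 0 ≤ a) (ha0 : a ≠ 0) : ∃ δ : ℝ, 0 < δ ∧ fEps δ a ≠ 0 := by
  have hpos : 0 < ‖a‖ := norm_pos_iff.2 ha0
  refine ⟨‖a‖ / 2, half_pos hpos, fun h => ?_⟩
  have := norm_sub_conjugate_fEps_le ha (half_pos hpos)
  rw [h, mul_zero, sub_zero] at this
  linarith

namespace Stabilization

variable (SB : Stabilization A W)

theorem corner_nonneg {a : A} (ha : 0 ≤ a) : 0 ≤ SB.corner a := by
  obtain ⟨k, hk, rfl⟩ := exists_isSelfAdjoint_mul_self_eq ha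
  rw [map_mul]
  exact (hk.map SB.corner).mul_self_nonneg

omit [PartialOrder A] [StarOrderedRing A] [PartialOrder W] [StarOrderedRing W] in
theorem corner_fEps {a : A} (ha : IsSelfAdjoint a) (ε : ℝ) :
    SB.corner (fEps ε a) = fEps ε (SB.corner a) :=
  NonUnitalStarAlgHom.map_cfcₙ (S := ℂ) SB.corner (cutoff ε) a (continuous_cutoff ε).continuousOn
    (cutoff_zero ε) (SB.continuous_emb 0 0) ha (ha.map SB.corner)

theorem exists_isQuasiTraceBase (hA : IsSimpleCStar A) : ∃ e : A, 0 ≤ e ∧ e ≠ 0 ∧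
    e ∈ pedersen A ∧ IsQuasiTraceBase (QTSetHer (SB.emb 0 0 e)) := by
  obtain ⟨x, hx⟩ := hA.1
  have ha := star_mul_self_nonneg x
  obtain ⟨δ, hδ, he⟩ := exists_fEps_ne_zero ha ((CStarRing.star_mul_self_ne_zero_iff x).2 hx)
  set e := fEps δ (star x * x)
  have hes : IsSelfAdjoint e := isSelfAdjoint_fEps _ _
  refine ⟨e, fEps_nonneg ha δ, he,
    mem_pedersen_of_mul_eq (fEps_mul_fEps (half_pos hδ) le_rfl), ?_⟩
  have hdense := SB.dense_sandwichIdeal_corner hA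
    (hes.conjugate_self hes) (mul_self_mul_self_ne_zero hes he)
  have hcorner : SB.corner e = fEps δ (SB.corner (star x * x)) :=
    SB.corner_fEps ha.isSelfAdjoint δ
  rw [map_mul, map_mul, hcorner] at hdense
  change IsQuasiTraceBase (QTSetHer (SB.corner e))
  rw [hcorner]
  exact isQuasiTraceBase_QTSetHer_fEps (SB.corner_nonneg ha) hδ hdense

end Stabilization

/-! ### The uniform gap -/

section Gap

variable {S : Set (QuasiTrace R)} {a b : R}

omit [StarOrderedRing R] in
theorem omegaOn_eq_zero_of_subset {T : Set (QuasiTrace R)} (hST : S ⊆ T) (hT : omegaOn T a = 0) :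
    omegaOn S a = 0 :=
  le_zero_iff.1 <| (iInf_mono fun _ => biSup_mono fun _ hτ => hST hτ).trans hT.le

omit [StarOrderedRing R] in
theorem exists_dimFun_le_map_fEps_add (hω : omegaOn S a = 0) {η : ℝ≥0∞} (hη : η ≠ 0) :
    ∃ ε : ℝ, 0 < ε ∧ ∀ τ ∈ S, dimFun τ.toFun a ≤ τ.toFun (fEps ε a) + η := by
  obtain ⟨n, hn⟩ := iInf_lt_iff.1 (hω.trans_lt (pos_iff_ne_zero.2 hη))
  refine ⟨1 / (n + 1), by positivity, fun τ hτ => tsub_le_iff_left.1 (le_trans ?_ hn.le)⟩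
  exact le_iSup₂ (f := fun (τ : QuasiTrace R) (_ : τ ∈ S) =>
    dTau τ a - τ.toFun (fEps (1 / (n + 1)) a)) τ hτ

/-- The pointwise limit `φ` need not be lower semicontinuous; `T` is its regularisation. -/
theorem IsQuasiTraceBase.exists_quasiTrace_lim (hS : IsQuasiTraceBase S) {ι : Type*}
    {t : ι → QuasiTrace R} (ht : ∀ i, t i ∈ S) (U : Ultrafilter ι) :
    ∃ (φ : R → ℝ≥0∞) (T : QuasiTrace R), (∀ x, Tendsto (fun i => (t i).toFun x) U (𝓝 (φ x))) ∧
      ¬ T.IsZero ∧ (∀ x, 0 ≤ x → T.toFun x ≤ φ x) ∧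
      ∀ x, 0 ≤ x → ∀ ε > 0, φ (fEps ε x) ≤ T.toFun (fEps (ε / 2) x) := by
  choose σ hσ using fun i => (t i).exists_isMatrixExtension
  have hφ := IsMatrixExtension.lim_ultrafilter hσ U
  have hlim := tendsto_lim_ultrafilter (fun i => (t i).toFun) U
  set φ : R → ℝ≥0∞ := fun x => (U.map fun i => (t i).toFun x).lim
  have hfin : ∀ x ∈ pedersen R, 0 ≤ x → lscReg φ x < ∞ := fun x hx hx0 => by
    obtain ⟨C, hC, hCx⟩ := hS.bounded_on_pedersen x hx hx0
    exact ((hφ.left.lscReg_le_self hx0).trans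
      (le_of_tendsto (hlim x) (.of_forall fun i => hCx _ (ht i)))).trans_lt hC.lt_top
  refine ⟨φ, hφ.lscReg.toQuasiTrace hφ.left.lowerSemicontinuousOn_lscReg
    (fun x hx => lscReg_of_not_nonneg φ hx) hfin, hlim, fun hzero => ?_,
    fun x hx => hφ.left.lscReg_le_self hx, fun x hx ε hε => hφ.left.map_fEps_le_lscReg hx hε⟩
  obtain ⟨h, hh, δ, hδ, hone⟩ := hS.exists_one_le_map_fEps
  have hφh : 1 ≤ φ (fEps δ h) := ge_of_tendsto (hlim _) (.of_forall fun i => hone _ (ht i))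
  have hreg : lscReg φ (fEps (δ / 2) h) = 0 := hzero _
  exact not_le_of_gt zero_lt_one ((hφh.trans (hφ.left.map_fEps_le_lscReg hh hδ)).trans hreg.le)

/-- Otherwise there are `t n ∈ S` for which the gap is at most `1 / n`; as the oscillation of `a`
vanishes, `dimFun a` is upper semicontinuous along them and the limit violates `hlt`. -/
theorem IsQuasiTraceBase.exists_dimFun_add_le (hS : IsQuasiTraceBase S) (ha : 0 ≤ a) (hb : 0 ≤ b)
    (hω : omegaOn S a = 0)
    (hlt : ∀ τ : QuasiTrace R, ¬ τ.IsZero → dimFun τ.toFun a < dimFun τ.toFun b) :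
    ∃ η : ℝ≥0∞, η ≠ 0 ∧ ∀ τ ∈ S, dimFun τ.toFun a + η ≤ dimFun τ.toFun b := by
  by_contra! hcon
  choose t ht hgap using fun n : ℕ => hcon (n : ℝ≥0∞)⁻¹ (by simp)
  obtain ⟨φ, T, hφ, hT, hTφ, hφT⟩ := hS.exists_quasiTrace_lim ht (hyperfilter ℕ)
  refine (hlt T hT).not_ge (ENNReal.le_of_forall_pos_le_add fun η hη _ => iSup_le fun m => ?_)
  obtain ⟨ε, hε, hεa⟩ := exists_dimFun_le_map_fEps_add hω (ENNReal.coe_ne_zero.2 hη.ne')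
  have hlim : Tendsto (fun n : ℕ => (t n).toFun (fEps ε a) + η + (n : ℝ≥0∞)⁻¹) (hyperfilter ℕ)
      (𝓝 (φ (fEps ε a) + η)) := by
    simpa only [add_zero] using ((hφ _).add_const _).add
      (ENNReal.tendsto_inv_nat_nhds_zero.mono_left Nat.hyperfilter_le_atTop)
  calc T.toFun (fEps (1 / (m + 1)) b) ≤ φ (fEps (1 / (m + 1)) b) := hTφ _ (fEps_nonneg hb _)
    _ ≤ φ (fEps ε a) + η := le_of_tendsto_of_tendsto' (hφ _) hlim fun n =>
      calc (t n).toFun (fEps (1 / (m + 1)) b) ≤ dimFun (t n).toFun b :=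
            (t n).isPreQuasiTrace.map_fEps_le_dimFun hb (by positivity)
        _ ≤ dimFun (t n).toFun a + (n : ℝ≥0∞)⁻¹ := (hgap n).le
        _ ≤ (t n).toFun (fEps ε a) + η + (n : ℝ≥0∞)⁻¹ := by gcongr; exact hεa _ (ht n)
    _ ≤ dimFun T.toFun a + η := by
      gcongr
      exact (hφT a ha ε hε).trans (T.isPreQuasiTrace.map_fEps_le_dimFun ha (half_pos hε))

end Gap

/-! ### Exhausting `b` -/

theorem IsPreQuasiTrace.dimFun_mul_mul_le {φ : R → ℝ≥0∞} (hφ : IsPreQuasiTrace φ) {q d : R}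
    (hq : 0 ≤ q) (hd : 0 ≤ d) : dimFun φ (q * d * q) ≤ dimFun φ q := by
  obtain ⟨l, hl, rfl⟩ := exists_isSelfAdjoint_mul_self_eq hq
  refine hφ.dimFun_le_of_le_smul (hq.isSelfAdjoint.conjugate_nonneg hd) hq
    (norm_nonneg (l * d * l)) ?_
  simpa only [mul_assoc] using conjugate_le_norm_smul hl (hl.conjugate_nonneg hd).isSelfAdjoint

/-- `d` is dominated by twice the sum of its compressions by `1 - q` and by `q`. -/
theorem QuasiTrace.dimFun_le_conjOneSub_add (τ : QuasiTrace R) {q d : R} (hq : 0 ≤ q)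
    (hd : 0 ≤ d) : dimFun τ.toFun d ≤ dimFun τ.toFun (conjOneSub q d) + dimFun τ.toFun q := by
  have hqs := hq.isSelfAdjoint
  have h1 := conjOneSub_nonneg hqs hd
  have h2 := hqs.conjugate_nonneg hd
  have hle : d ≤ (2 : ℝ) • (conjOneSub q d + q * d * q) := by
    rw [← sub_nonneg]
    convert conjOneSub_nonneg (hqs.add hqs) hd using 1
    rw [two_smul, conjOneSub, conjOneSub]
    noncomm_ring
  calc dimFun τ.toFun d ≤ dimFun τ.toFun (conjOneSub q d + q * d * q) :=
        τ.isPreQuasiTrace.dimFun_le_of_le_smul hd (add_nonneg h1 h2) zero_le_two hle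
    _ ≤ dimFun τ.toFun (conjOneSub q d) + dimFun τ.toFun (q * d * q) := τ.dimFun_add_le h1 h2
    _ ≤ _ := by gcongr; exact τ.isPreQuasiTrace.dimFun_mul_mul_le hq hd

theorem CuntzLE.exists_mem_closedRightIdeal {k h β : R} (hC : CuntzLE k β) (hβ : 0 ≤ β)
    (hk : IsSelfAdjoint k) (hh : IsSelfAdjoint h) (hkh : k * h = h) :
    ∃ s ∈ closedRightIdeal β, star s * s = h * h := by
  obtain ⟨r, hr⟩ := hC.exists_norm_sub_le (κ := 1 / 2) (by norm_num)
  obtain ⟨m, hm, hmm, hmβ⟩ := exists_sqrt_mem_closedRightIdeal hβ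
  set z := √2 • (m * r * h)
  have hz : z ∈ closedRightIdeal β :=
    (closedRightIdeal β).smul_mem (√2 : ℂ)
      (mul_mem_closedRightIdeal (mul_mem_closedRightIdeal hmβ r) h)
  have hzz : star z * z = (2 : ℝ) • (h * (star r * β * r) * h) := by
    rw [star_smul, smul_mul_smul_comm, star_trivial, Real.mul_self_sqrt zero_le_two, star_mul,
      star_mul, hh.star_eq, hm.star_eq, ← hmm]
    simp only [mul_assoc]
  have hhalf : h * h - h * (star r * β * r) * h ≤ (1 / 2 : ℝ) • (h * h) :=
    calc h * h - h * (star r * β * r) * h = h * (k - star r * β * r) * h := by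
          rw [mul_sub, sub_mul, mul_assoc h k h, hkh]
      _ ≤ ‖k - star r * β * r‖ • (h * h) := conjugate_le_norm_smul hh
          (hk.sub (star_left_conjugate_nonneg hβ r).isSelfAdjoint)
      _ ≤ (1 / 2 : ℝ) • (h * h) := smul_le_smul_of_nonneg_right hr hh.mul_self_nonneg
  have hle : h * star h ≤ star z * z := by
    rw [hh.star_eq, hzz, ← sub_nonneg]
    have := smul_nonneg (zero_le_two (α := ℝ)) (sub_nonneg.2 hhalf)
    convert this using 1
    module
  obtain ⟨s, hs, hss⟩ := exists_star_mul_self_eq_of_le hle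
  exact ⟨s, closedRightIdeal_le hz hs, hss.trans (by rw [hh.star_eq])⟩

/-- With `star s * s = h * h`, the element `s * γ` is fixed by `s * star s`, so it is orthogonal to
the compression of `β` by `1 - s * star s`. -/
theorem CuntzLE.exists_orthogonal_step {k h γ β : R} (hC : CuntzLE k β) (hβ : 0 ≤ β) (hk : 0 ≤ k)
    (hh : IsSelfAdjoint h) (hkh : k * h = h) (hhγ : h * h * γ = γ) :
    ∃ x β' : R, 0 ≤ β' ∧ star x * x = star γ * γ ∧ β' * x = 0 ∧ x ∈ closedRightIdeal β ∧
      β' ∈ closedRightIdeal β ∧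
      ∀ τ : QuasiTrace R, dimFun τ.toFun β ≤ dimFun τ.toFun β' + dimFun τ.toFun k := by
  have hks := hk.isSelfAdjoint
  obtain ⟨s, hs, hss⟩ := hC.exists_mem_closedRightIdeal hβ hks hh hkh
  obtain ⟨m, -, hmm, hmβ⟩ := exists_sqrt_mem_closedRightIdeal hβ
  have hββ : β ∈ closedRightIdeal β := hmm ▸ mul_mem_closedRightIdeal hmβ m
  have hq := mul_star_self_nonneg s
  have hqβ (y : R) : s * star s * y ∈ closedRightIdeal β := by
    rw [mul_assoc]
    exact mul_mem_closedRightIdeal hs _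
  have hsγ : star s * (s * γ) = γ := by rw [← mul_assoc, hss, hhγ]
  refine ⟨s * γ, conjOneSub (s * star s) β, conjOneSub_nonneg hq.isSelfAdjoint hβ, ?_,
    conjOneSub_mul_eq_zero (by rw [mul_assoc, hsγ]), mul_mem_closedRightIdeal hs γ, ?_, fun τ => ?_⟩
  · rw [star_mul, mul_assoc, hsγ]
  · refine add_mem (sub_mem (sub_mem hββ (hqβ β)) (mul_mem_closedRightIdeal hββ _)) ?_
    exact mul_mem_closedRightIdeal (hqβ β) _
  · refine (τ.dimFun_le_conjOneSub_add hq hβ).trans ?_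
    gcongr
    have hhk : h * k = h := by
      simpa only [star_mul, hh.star_eq, hks.star_eq] using congrArg star hkh
    rw [← τ.isPreQuasiTrace.dimFun_star_mul_self, hss]
    simpa only [← mul_assoc, hkh, mul_assoc h h k, hhk] using
      τ.isPreQuasiTrace.dimFun_mul_mul_le hk hh.mul_self_nonneg

omit [PartialOrder R] [StarOrderedRing R] in
theorem hasSum_star_mul_self_of_pairwise {ι : Type*} {x : ι → R} (hx : Summable x)
    (horth : Pairwise fun i j => star (x i) * x j = 0) :
    HasSum (fun i => star (x i) * x i) (star (∑' i, x i) * ∑' i, x i) := by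
  have hcont : Continuous fun y : R => star y * y := by fun_prop
  refine ((hcont.tendsto _).comp hx.hasSum).congr fun F => ?_
  simp only [Function.comp_apply, star_sum, Finset.sum_mul_sum]
  exact Finset.sum_congr rfl fun i hi =>
    Finset.sum_eq_single i (fun j _ hj => horth hj.symm) (absurd hi)

omit [PartialOrder R] [StarOrderedRing R] in
theorem norm_eq_of_star_mul_self_eq {x y : R} (h : star x * x = star y * y) : ‖x‖ = ‖y‖ := by
  rw [← mul_self_inj (norm_nonneg x) (norm_nonneg y), ← CStarRing.norm_star_mul_self, h,
    CStarRing.norm_star_mul_self]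

/-- A splitting `a = ∑ star (γ n) * γ n` with `∑ ‖γ n‖ < ∞`, in which `k n` acts as a unit on
`h n`, and `h n` as a unit on `γ n`. -/
structure IsDecomposition (a : R) (k h γ : ℕ → R) : Prop where
  nonneg : ∀ n, 0 ≤ k n
  isSelfAdjoint : ∀ n, IsSelfAdjoint (h n)
  mul_eq : ∀ n, k n * h n = h n
  mul_mul_eq : ∀ n, h n * h n * γ n = γ n
  summable_norm : Summable fun n => ‖γ n‖
  hasSum : HasSum (fun n => star (γ n) * γ n) a

namespace IsDecomposition

variable {S : Set (QuasiTrace R)} {a b : R} {k h γ : ℕ → R}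

/-- At stage `n` the remainder `β` of `b` has lost at most the dimension of `k 0, …, k (n - 1)`. -/
theorem exists_orthogonal_seq (hd : IsDecomposition a k h γ) (hb : 0 ≤ b)
    (hcomp : ∀ n β, 0 ≤ β → (∀ τ ∈ S, dimFun τ.toFun b ≤
      dimFun τ.toFun β + ∑ i ∈ Finset.range n, dimFun τ.toFun (k i)) → CuntzLE (k n) β) :
    ∃ x : ℕ → R, (∀ n, x n ∈ closedRightIdeal b) ∧
      (∀ n, star (x n) * x n = star (γ n) * γ n) ∧ Pairwise fun i j => star (x i) * x j = 0 := by
  let P (n : ℕ) (β : R) : Prop := 0 ≤ β ∧ ∀ τ ∈ S, dimFun τ.toFun b ≤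
    dimFun τ.toFun β + ∑ i ∈ Finset.range n, dimFun τ.toFun (k i)
  have hstep (n : ℕ) (β : {β // P n β}) : ∃ (x : R) (β' : {β // P (n + 1) β}),
      star x * x = star (γ n) * γ n ∧ β'.1 * x = 0 ∧ x ∈ closedRightIdeal β.1 ∧
        β'.1 ∈ closedRightIdeal β.1 := by
    obtain ⟨β, hβ, hdim⟩ := β
    obtain ⟨x, β', hβ', hx, hβx, hxβ, hββ, hdim'⟩ := (hcomp n β hβ hdim).exists_orthogonal_step hβ
      (hd.nonneg n) (hd.isSelfAdjoint n) (hd.mul_eq n) (hd.mul_mul_eq n)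
    refine ⟨x, ⟨β', hβ', fun τ hτ => (hdim τ hτ).trans ?_⟩, hx, hβx, hxβ, hββ⟩
    rw [Finset.sum_range_succ, add_comm (∑ i ∈ Finset.range n, _), ← add_assoc]
    gcongr
    exact hdim' τ
  choose X β' hXγ hβX hXβ hββ using hstep
  let B : ∀ n, {β // P n β} := Nat.rec ⟨b, hb, fun τ _ => by simp⟩ β'
  have hanti : Antitone fun n => closedRightIdeal (B n).1 :=
    antitone_nat_of_succ_le fun n => closedRightIdeal_le (hββ n (B n))
  have horth {i j : ℕ} (hij : i < j) : star (X j (B j)) * X i (B i) = 0 :=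
    star_mul_eq_zero_of_mem_closedRightIdeal (B (i + 1)).2.1.isSelfAdjoint (hβX i (B i))
      (hanti hij (hXβ j (B j)))
  refine ⟨fun n => X n (B n), fun n => hanti n.zero_le (hXβ n (B n)), fun n => hXγ n (B n),
    fun i j hij => ?_⟩
  obtain hij | hij := hij.lt_or_gt
  · simpa only [star_mul, star_star, star_zero] using congrArg star (horth hij)
  · exact horth hij

theorem exists_star_mul_self_eq (hd : IsDecomposition a k h γ) (hb : 0 ≤ b)
    (hcomp : ∀ n β, 0 ≤ β → (∀ τ ∈ S, dimFun τ.toFun b ≤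
      dimFun τ.toFun β + ∑ i ∈ Finset.range n, dimFun τ.toFun (k i)) → CuntzLE (k n) β) :
    ∃ x : R, star x * x = a ∧ x * star x ∈ her b := by
  obtain ⟨x, hxb, hxγ, horth⟩ := hd.exists_orthogonal_seq hb hcomp
  have hx : Summable x := .of_norm <| by
    simpa only [fun n => norm_eq_of_star_mul_self_eq (hxγ n)] using hd.summable_norm
  refine ⟨∑' n, x n, ?_, mul_star_self_mem_her hb.isSelfAdjoint ?_⟩
  · have hsum := hasSum_star_mul_self_of_pairwise hx horth
    simp only [hxγ] at hsum
    exact hsum.unique hd.hasSum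
  · exact (isClosed_closedRightIdeal b).mem_of_tendsto hx.hasSum
      (.of_forall fun F => sum_mem fun n _ => hxb n)

end IsDecomposition

/-! ### Bands of the spectrum of `a` -/

/-- The trapezoidal function of the band `[δ, θ / 2]`, equal to `1` there and to `0` outside
`[δ / 2, θ]` (for `0 < δ ≤ θ / 2`). -/
def bandCut (δ θ : ℝ) : ℝ → ℝ := fun t => cutoff δ t - cutoff θ t

/-- The square root of `t * bandCut δ θ t`; its value at `a` is the part of `√a` that lives in the
band. -/
def bandRoot (δ θ : ℝ) : ℝ → ℝ := fun t => √(t * bandCut δ θ t)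

section BandCut

variable {δ θ δ' θ' t : ℝ}

@[fun_prop]
theorem continuous_bandCut (δ θ : ℝ) : Continuous (bandCut δ θ) := by
  unfold bandCut
  fun_prop

@[simp]
theorem bandCut_zero (δ θ : ℝ) : bandCut δ θ 0 = 0 := by simp [bandCut]

theorem bandCut_nonneg (hδ : 0 < δ) (h : δ ≤ θ) (ht : 0 ≤ t) : 0 ≤ bandCut δ θ t :=
  sub_nonneg.2 (cutoff_anti hδ h ht)

theorem bandCut_le_one (δ θ t : ℝ) : bandCut δ θ t ≤ 1 :=
  (sub_le_self _ (cutoff_nonneg θ t)).trans (cutoff_le_one δ t)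

theorem bandCut_eq_zero_of_le (hδ : 0 < δ) (h : δ ≤ θ) (ht : t ≤ δ / 2) : bandCut δ θ t = 0 := by
  rw [bandCut, cutoff_eq_zero hδ ht, cutoff_eq_zero (by linarith) (by linarith), sub_zero]

theorem bandCut_eq_zero_of_ge (hδ : 0 < δ) (h : δ ≤ θ) (ht : θ ≤ t) : bandCut δ θ t = 0 := by
  rw [bandCut, cutoff_eq_one hδ (h.trans ht), cutoff_eq_one (by linarith) ht, sub_self]

theorem bandCut_mul_bandCut (hδ' : 0 < δ') (hδ : δ' ≤ δ / 2) (h : δ ≤ θ) (hθ : θ ≤ θ' / 2) :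
    bandCut δ' θ' t * bandCut δ θ t = bandCut δ θ t := by
  have h1 : cutoff δ' t * cutoff δ t = cutoff δ t := cutoff_mul_cutoff hδ' hδ
  have h2 : cutoff δ' t * cutoff θ t = cutoff θ t := cutoff_mul_cutoff hδ' (by linarith)
  have h3 : cutoff δ t * cutoff θ' t = cutoff θ' t := cutoff_mul_cutoff (by linarith) (by linarith)
  have h4 : cutoff θ t * cutoff θ' t = cutoff θ' t := cutoff_mul_cutoff (by linarith) hθ
  unfold bandCut
  linear_combination h1 - h2 - h3 + h4

theorem cutoff_bandCut_add_cutoff_le (μ : ℝ) (hδ : 0 < δ) (h : δ ≤ θ) (t : ℝ) :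
    cutoff μ (bandCut δ θ t) + cutoff (2 * θ) t ≤ cutoff (δ / 2) t := by
  rcases le_total t (δ / 2) with hlow | hlow
  · rw [bandCut_eq_zero_of_le hδ h hlow, cutoff_zero, zero_add,
      cutoff_eq_zero (by linarith) (by linarith)]
    exact cutoff_nonneg _ t
  rw [cutoff_eq_one (half_pos hδ) hlow]
  rcases le_total t θ with hhigh | hhigh
  · rw [cutoff_eq_zero (ε := 2 * θ) (by linarith) (by linarith), add_zero]
    exact cutoff_le_one _ _
  · rw [bandCut_eq_zero_of_ge hδ h hhigh, cutoff_zero, zero_add]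
    exact cutoff_le_one _ t

@[fun_prop]
theorem continuous_bandRoot (δ θ : ℝ) : Continuous (bandRoot δ θ) := by
  unfold bandRoot
  fun_prop

@[simp]
theorem bandRoot_zero (δ θ : ℝ) : bandRoot δ θ 0 = 0 := by simp [bandRoot]

theorem bandRoot_mul_self (hδ : 0 < δ) (h : δ ≤ θ) (ht : 0 ≤ t) :
    bandRoot δ θ t * bandRoot δ θ t = t * bandCut δ θ t :=
  Real.mul_self_sqrt (mul_nonneg ht (bandCut_nonneg hδ h ht))

theorem bandCut_mul_bandRoot (hδ' : 0 < δ') (hδ : δ' ≤ δ / 2) (h : δ ≤ θ) (hθ : θ ≤ θ' / 2) :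
    bandCut δ' θ' t * bandRoot δ θ t = bandRoot δ θ t := by
  by_cases hband : bandCut δ θ t = 0
  · simp [bandRoot, hband]
  · rw [mul_eq_right₀ hband |>.1 (bandCut_mul_bandCut hδ' hδ h hθ), one_mul]

theorem bandRoot_le_sqrt (hδ : 0 < δ) (h : δ ≤ θ) (ht : 0 ≤ t) : bandRoot δ θ t ≤ √θ := by
  refine Real.sqrt_le_sqrt ?_
  rcases le_total t θ with hθ | hθ
  · exact (mul_le_of_le_one_right ht (bandCut_le_one δ θ t)).trans hθ
  · rw [bandCut_eq_zero_of_ge hδ h hθ, mul_zero]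
    exact (hδ.trans_le h).le

end BandCut

section BandElements

variable {a : R} {δ θ δ' θ' : ℝ}

theorem cfcₙ_bandCut_mul_bandCut (ha : 0 ≤ a) (hδ' : 0 < δ') (hδ : δ' ≤ δ / 2) (h : δ ≤ θ)
    (hθ : θ ≤ θ' / 2) :
    cfcₙ (bandCut δ' θ') a * cfcₙ (bandCut δ θ) a = cfcₙ (bandCut δ θ) a := by
  rw [← cfcₙ_mul (bandCut δ' θ') (bandCut δ θ) a]
  exact cfcₙ_congr_of_nonneg ha fun t _ => bandCut_mul_bandCut hδ' hδ h hθ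

theorem cfcₙ_bandCut_mul_bandRoot (ha : 0 ≤ a) (hδ' : 0 < δ') (hδ : δ' ≤ δ / 2) (h : δ ≤ θ)
    (hθ : θ ≤ θ' / 2) :
    cfcₙ (bandCut δ' θ') a * cfcₙ (bandRoot δ θ) a = cfcₙ (bandRoot δ θ) a := by
  rw [← cfcₙ_mul (bandCut δ' θ') (bandRoot δ θ) a]
  exact cfcₙ_congr_of_nonneg ha fun t _ => bandCut_mul_bandRoot hδ' hδ h hθ

theorem norm_cfcₙ_bandRoot_le (ha : 0 ≤ a) (hδ : 0 < δ) (h : δ ≤ θ) :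
    ‖cfcₙ (bandRoot δ θ) a‖ ≤ √θ :=
  norm_cfcₙ_le_of_nonneg ha fun _ ht =>
    (abs_of_nonneg (Real.sqrt_nonneg _)).trans_le (bandRoot_le_sqrt hδ h ht)

theorem star_mul_self_cfcₙ_bandRoot (ha : 0 ≤ a) (hδ : 0 < δ) (h : δ ≤ θ) :
    star (cfcₙ (bandRoot δ θ) a) * cfcₙ (bandRoot δ θ) a = fEps δ a * a - fEps θ a * a := by
  have hs := ha.isSelfAdjoint
  rw [star_cfcₙ, ← cfcₙ_mul (bandRoot δ θ) (bandRoot δ θ) a, fEps, fEps,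
    cfcₙ_mul_self (by fun_prop) (cutoff_zero δ) hs, cfcₙ_mul_self (by fun_prop) (cutoff_zero θ) hs,
    ← cfcₙ_sub (fun t => cutoff δ t * t) (fun t => cutoff θ t * t) a]
  refine cfcₙ_congr_of_nonneg ha fun t ht => ?_
  rw [bandRoot_mul_self hδ h ht, bandCut]
  ring

omit [PartialOrder R] [StarOrderedRing R] in
theorem fEps_cfcₙ_bandCut (ha : IsSelfAdjoint a) (μ δ θ : ℝ) :
    fEps μ (cfcₙ (bandCut δ θ) a) = cfcₙ (fun t => cutoff μ (bandCut δ θ t)) a :=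
  (cfcₙ_comp' (cutoff μ) (bandCut δ θ) a).symm

theorem QuasiTrace.dimFun_bandCut_add_le (τ : QuasiTrace R) (ha : 0 ≤ a) (hδ : 0 < δ)
    (h : δ ≤ θ) :
    dimFun τ.toFun (cfcₙ (bandCut δ θ) a) + τ.toFun (fEps (2 * θ) a) ≤ dimFun τ.toFun a := by
  rw [dimFun, ENNReal.iSup_add]
  refine iSup_le fun m => ?_
  set μ : ℝ := 1 / (m + 1)
  calc τ.toFun (fEps μ (cfcₙ (bandCut δ θ) a)) + τ.toFun (fEps (2 * θ) a)
      = τ.toFun (cfcₙ (fun t => cutoff μ (bandCut δ θ t) + cutoff (2 * θ) t) a) := by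
        rw [fEps_cfcₙ_bandCut ha.isSelfAdjoint, fEps, ← τ.map_add_of_commute _ _
          (cfcₙ_nonneg_of_nonneg ha fun t _ => cutoff_nonneg μ _)
          (cfcₙ_nonneg_of_nonneg ha fun t _ => cutoff_nonneg _ t) (cfcₙ_commute_cfcₙ _ _ a),
          cfcₙ_add (fun t => cutoff μ (bandCut δ θ t)) (cutoff (2 * θ)) a]
    _ ≤ τ.toFun (fEps (δ / 2) a) := τ.isPreQuasiTrace.mono_cfcₙ ha (by fun_prop) (by simp)
        (by fun_prop) (cutoff_zero _) (fun t _ => add_nonneg (cutoff_nonneg μ _)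
          (cutoff_nonneg _ t)) fun t _ => cutoff_bandCut_add_cutoff_le μ hδ h t
    _ ≤ dimFun τ.toFun a := τ.isPreQuasiTrace.map_fEps_le_dimFun ha (half_pos hδ)

theorem fEps_eq_zero (ha : 0 ≤ a) {ε : ℝ} (hε : 0 < ε) (h : 2 * ‖a‖ ≤ ε) : fEps ε a = 0 := by
  rw [fEps, ← cfcₙ_const_zero ℝ a]
  refine cfcₙ_congr fun t ht => cutoff_eq_zero hε ?_
  linarith [le_norm_of_mem_quasispectrum ha.isSelfAdjoint ht]

theorem norm_sub_fEps_mul_self_le (ha : 0 ≤ a) {ε : ℝ} (hε : 0 < ε) :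
    ‖fEps ε a * a - a‖ ≤ ε := by
  nth_rw 3 [← cfcₙ_id' ℝ a]
  rw [fEps, cfcₙ_mul_self (by fun_prop) (cutoff_zero ε) ha.isSelfAdjoint,
    ← cfcₙ_sub (fun t => cutoff ε t * t) (fun t => t) a]
  refine norm_cfcₙ_le_of_nonneg ha fun t ht => ?_
  rw [← sub_one_mul, abs_mul, abs_of_nonneg ht, abs_of_nonpos (sub_nonpos.2 (cutoff_le_one ε t))]
  rcases le_total t ε with h | h
  · nlinarith [cutoff_nonneg ε t]
  · simp [cutoff_eq_one hε h, hε.le]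

end BandElements

section BandDecomposition

variable {a : R} {ε : ℕ → ℝ}

theorem hasSum_star_mul_self_cfcₙ_bandRoot (ha : 0 ≤ a) (hε : ∀ n, 0 < ε n) (hanti : Antitone ε)
    (hsum : Summable ε) (h0 : 2 * ‖a‖ ≤ ε 0) :
    HasSum (fun n => star (cfcₙ (bandRoot (ε (n + 1)) (ε n)) a) *
      cfcₙ (bandRoot (ε (n + 1)) (ε n)) a) a := by
  have hsummable : Summable fun n => star (cfcₙ (bandRoot (ε (n + 1)) (ε n)) a) *
      cfcₙ (bandRoot (ε (n + 1)) (ε n)) a := by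
    refine .of_norm_bounded hsum fun n => ?_
    rw [CStarRing.norm_star_mul_self]
    have hle := norm_cfcₙ_bandRoot_le ha (hε (n + 1)) (hanti n.le_succ)
    exact (mul_self_le_mul_self (norm_nonneg _) hle).trans_eq (Real.mul_self_sqrt (hε n).le)
  refine hsummable.hasSum_iff_tendsto_nat.2 ?_
  simp only [star_mul_self_cfcₙ_bandRoot ha (hε _) (hanti (Nat.le_succ _)),
    Finset.sum_range_sub fun n => fEps (ε n) a * a, fEps_eq_zero ha (hε 0) h0, zero_mul, sub_zero]
  exact tendsto_iff_norm_sub_tendsto_zero.2 <| squeeze_zero (fun _ => norm_nonneg _)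
    (fun n => norm_sub_fEps_mul_self_le ha (hε n)) hsum.tendsto_atTop_zero

theorem isDecomposition_bandRoot (ha : 0 ≤ a) (hε : ∀ n, 0 < ε n)
    (hdecay : ∀ n, ε (n + 1) ≤ ε n / 4) (h0 : 2 * ‖a‖ ≤ ε 0) :
    IsDecomposition a (fun n => cfcₙ (bandCut (ε (n + 1) / 4) (4 * ε n)) a)
      (fun n => cfcₙ (bandCut (ε (n + 1) / 2) (2 * ε n)) a)
      (fun n => cfcₙ (bandRoot (ε (n + 1)) (ε n)) a) := by
  have hle (n : ℕ) : ε (n + 1) ≤ ε n := by linarith [hε n, hdecay n]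
  have hroot (n : ℕ) : cfcₙ (bandCut (ε (n + 1) / 2) (2 * ε n)) a *
      cfcₙ (bandRoot (ε (n + 1)) (ε n)) a = cfcₙ (bandRoot (ε (n + 1)) (ε n)) a :=
    cfcₙ_bandCut_mul_bandRoot ha (half_pos (hε _)) le_rfl (hle n) (by linarith)
  have hsqrt : Summable fun n => √(ε n) := by
    refine summable_of_ratio_norm_eventually_le (r := 1 / 2) (by norm_num) (.of_forall fun n => ?_)
    simp only [Real.norm_of_nonneg (Real.sqrt_nonneg _)]
    refine (Real.sqrt_le_sqrt (hdecay n)).trans_eq ?_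
    rw [Real.sqrt_div' _ zero_le_four, show (4 : ℝ) = 2 ^ 2 by norm_num,
      Real.sqrt_sq zero_le_two]
    ring
  have hsum : Summable ε := by
    refine summable_of_ratio_norm_eventually_le (r := 1 / 4) (by norm_num) (.of_forall fun n => ?_)
    simp only [Real.norm_of_nonneg (hε _).le]
    linarith [hdecay n]
  refine ⟨fun n => cfcₙ_nonneg_of_nonneg ha fun t ht => bandCut_nonneg ?_ ?_ ht,
    fun n => cfcₙ_predicate _ a, fun n => cfcₙ_bandCut_mul_bandCut ha ?_ ?_ ?_ ?_,
    fun n => by rw [mul_assoc, hroot, hroot],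
    .of_nonneg_of_le (fun n => norm_nonneg _)
      (fun n => norm_cfcₙ_bandRoot_le ha (hε (n + 1)) (hle n)) hsqrt,
    hasSum_star_mul_self_cfcₙ_bandRoot ha hε (antitone_nat_of_succ_le hle) hsum h0⟩
  all_goals linarith [hε n, hε (n + 1), hle n]

end BandDecomposition

theorem exists_seq_le_div_four (r : ℝ) {c : ℕ → ℝ} (hc : ∀ n, 0 < c n) :
    ∃ ε : ℕ → ℝ, (∀ n, 0 < ε n) ∧ (∀ n, ε (n + 1) ≤ ε n / 4) ∧ r ≤ ε 0 ∧ ∀ n, ε (n + 1) ≤ c n := by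
  let ε : ℕ → ℝ := Nat.rec (max r 1) fun n e => min (c n) (e / 4)
  refine ⟨ε, fun n => ?_, fun n => min_le_right _ _, le_max_left _ _, fun n => min_le_left _ _⟩
  induction n with
  | zero => exact zero_lt_one.trans_le (le_max_right _ _)
  | succ n ih => exact lt_min (hc n) (div_pos ih zero_lt_four)

/-! ### The comparison theorem -/

section Comparison

variable {S : Set (QuasiTrace R)} {a b : R}

/-- The first band carries the dimension of `a`; as the oscillation of `a` vanishes, the later ones
can be chosen so low in the spectrum that their dimensions sum to less than `η`. -/
theorem exists_isDecomposition_sum_dimFun_lt (ha : 0 ≤ a) (hω : omegaOn S a = 0)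
    (hfin : ∀ τ ∈ S, dimFun τ.toFun a < ∞) {η : ℝ≥0∞} (hη : η ≠ 0) :
    ∃ k h γ : ℕ → R, IsDecomposition a k h γ ∧ ∀ τ ∈ S, ∀ n,
      ∑ i ∈ Finset.range (n + 1), dimFun τ.toFun (k i) < dimFun τ.toFun a + η := by
  obtain ⟨η', hη', hsum⟩ := ENNReal.exists_pos_sum_of_countable hη ℕ
  choose c hc hca using fun n =>
    exists_dimFun_le_map_fEps_add hω (ENNReal.coe_ne_zero.2 (hη' n).ne')
  obtain ⟨ε, hε, hdecay, h0, hεc⟩ :=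
    exists_seq_le_div_four (2 * ‖a‖) fun n => div_pos (hc n) (by norm_num : (0 : ℝ) < 8)
  have hband (τ : QuasiTrace R) (n : ℕ) :=
    τ.dimFun_bandCut_add_le ha (δ := ε (n + 1) / 4) (θ := 4 * ε n) (by linarith [hε (n + 1)])
      (by linarith [hε n, hdecay n])
  refine ⟨_, _, _, isDecomposition_bandRoot ha hε hdecay h0, fun τ hτ n => ?_⟩
  have hhead : dimFun τ.toFun (cfcₙ (bandCut (ε 1 / 4) (4 * ε 0)) a) ≤ dimFun τ.toFun a :=
    le_self_add.trans (hband τ 0)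
  have htail (n : ℕ) :
      dimFun τ.toFun (cfcₙ (bandCut (ε (n + 2) / 4) (4 * ε (n + 1))) a) ≤ η' n := by
    have hne : τ.toFun (fEps (2 * (4 * ε (n + 1))) a) ≠ ∞ :=
      ((le_add_self.trans (hband τ (n + 1))).trans_lt (hfin τ hτ)).ne
    refine (ENNReal.add_le_add_iff_right hne).1 ((hband τ (n + 1)).trans ((hca n τ hτ).trans ?_))
    rw [add_comm]
    gcongr
    exact τ.mono (fEps_nonneg ha _)
      (fEps_anti ha (by linarith [hε (n + 1)]) (by linarith [hεc n]))
  rw [Finset.sum_range_succ', add_comm]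
  exact ENNReal.add_lt_add_of_le_of_lt (hhead.trans_lt (hfin τ hτ)).ne hhead <|
    ((Finset.sum_le_sum fun i _ => htail i).trans (ENNReal.sum_le_tsum _)).trans_lt hsum

omit [StarOrderedRing R] in
theorem IsQuasiTraceBase.not_isZero (hS : IsQuasiTraceBase S) {τ : QuasiTrace R} (hτ : τ ∈ S) :
    ¬ τ.IsZero := fun hzero => by
  obtain ⟨h, -, δ, -, hone⟩ := hS.exists_one_le_map_fEps
  exact not_le_of_gt zero_lt_one ((hone τ hτ).trans_eq (hzero _))

omit [StarOrderedRing R] in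
theorem IsQuasiTraceBase.cuntzLE_of_dimFun_lt (hS : IsQuasiTraceBase S) (hR : StrictComparison R)
    (ha : 0 ≤ a) (hb : 0 ≤ b) (h : ∀ τ ∈ S, dimFun τ.toFun a < dimFun τ.toFun b) : CuntzLE a b := by
  refine hR a b ha hb fun τ hτ => ?_
  obtain ⟨c, -, -, τ', hτ', hc⟩ := hS.exists_const_mul_mem τ hτ
  have := h τ' hτ'
  rw [hc, dimFun_const_mul, dimFun_const_mul] at this
  exact lt_of_mul_lt_mul_left' this

end Comparison

theorem comparison_of_continuous_dimension_general (SB : Stabilization A W)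
    (hsimple : IsSimpleCStar A) (hsc : StrictComparison W) (a b : W) (ha : 0 ≤ a) (hb : 0 ≤ b)
    (hlt : ∀ τ : QuasiTrace W, ¬ τ.IsZero → dTau τ a < dTau τ b) (hω : OmegaZero SB a) :
    ∃ x : W, star x * x = a ∧ x * star x ∈ her b := by
  obtain ⟨e, he, hne, hped, hS⟩ := SB.exists_isQuasiTraceBase hsimple
  have hωS := omegaOn_eq_zero_of_subset subset_closure (hω e he hne hped)
  obtain ⟨η, hη, hgap⟩ := hS.exists_dimFun_add_le ha hb hωS hlt
  obtain ⟨k, h, γ, hdec, hk⟩ := exists_isDecomposition_sum_dimFun_lt ha hωS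
    (fun τ hτ => lt_top_of_lt (hlt τ (hS.not_isZero hτ))) hη
  refine hdec.exists_star_mul_self_eq (S := QTSetHer (SB.emb 0 0 e)) hb fun n β hβ hinv =>
    hS.cuntzLE_of_dimFun_lt hsc (hdec.nonneg n) hβ fun τ hτ => ?_
  have hsum := (hk τ hτ n).trans_le ((hgap τ hτ).trans (hinv τ hτ))
  rw [Finset.sum_range_succ, add_comm] at hsum
  exact lt_of_add_lt_add_right hsum

/-- **Theorem.** Let `A` be a σ-unital simple C*-algebra with strict comparison which is not
purely infinite.  If `a, b ∈ (A ⊗ K)₊` satisfy `d_τ(a) < d_τ(b) < ∞` for all nonzero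
`τ ∈ QT̃(A)` and `ω(a) = 0`, then `a ≾̃ b`: there is `x ∈ A ⊗ K` with `x*x = a` and
`xx* ∈ Her(b)`. -/
theorem comparison_of_continuous_dimension
    (SB : Stabilization A W)
    (hσ : SigmaUnital A) (hsimple : IsSimpleCStar A)
    (hsc : StrictComparison W) (hnpi : ¬ PurelyInfinite A)
    (a b : W) (ha : 0 ≤ a) (hb : 0 ≤ b)
    (hlt : ∀ τ : QuasiTrace W, ¬ τ.IsZero → dTau τ a < dTau τ b ∧ dTau τ b < ∞)
    (hω : OmegaZero SB a) :
    ∃ x : W, star x * x = a ∧ x * star x ∈ her b := by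
  exact comparison_of_continuous_dimension_general SB hsimple hsc a b ha hb
    (fun τ hτ => (hlt τ hτ).1) hω

end Paper
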